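/- Let k = (k_1,…,k_n) be integers with 1 ≤ k_1 < … < k_n, let s ≥ (n+1)·k_n + 1, and let F be a system of diagonal forms in s variables of degrees k_1,…,k_n with nonzero integer coefficients. Then the singular series 𝕊(F) = Σ_{q≥1} q^{−s} Σ_{a ∈ A_n(q)} Σ_{r ∈ [1,q]^s} e(a·F(r)/q) is absolutely convergent. Moreover, if the system F(x) = 0 has a nonsingular solution over ℚ_p for every prime p, then 𝕊(F) > 0. -/

import Mathlib

/-!
Write `T(q)` for the `q`-th term of the singular series and `k` for the largest degree.

*Local structure.* Sorting all vectors `a` modulo `q` by the exact denominator of `a / q` and using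
orthogonality gives `∑_{d ∣ q} T(d) = q^{n-s} · #{r mod q : F(r) = 0}`. The right side is real and
multiplicative in `q` by the Chinese remainder theorem, so `T` is the Möbius transform of a
multiplicative function and is itself real and multiplicative (`singSerTerm_eq_serTerm`,
`serTerm_isMultiplicative`).

*Convergence.* The sum over `r` factors into one-variable complete sums. Mordell's bound modulo `p`
(`norm_polySum_le`: the moment of order `2 * k` over all coefficients, computed by Newton's identities, is
compared with the many affine substitutions of the given polynomial) and Hua's descent on critical
residue classes modulo `p^h` (`exists_norm_expSum_prime_pow_le`) bound each of them by
`O(p^{h(1-1/k)})` with a constant independent of `p` and `h`. Since the degrees are distinct and the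
coefficients nonzero, this applies to every phase `∑_i a_i u_{i,j} X^{k_i}` after removing a bounded
power of `p`. With `s ≥ (n+1)k + 1` this yields `T(p^h) = O(p^{-h(1+1/k)})`, and a multiplicative
function with this decay at prime powers is absolutely summable (`summable_of_isMultiplicative`).

*Positivity.* By the Euler product, `∑ T(q) = ∏_p ∑_h T(p^h)`, and the partial sums of the factor
at `p` are the solution densities modulo `p^H`. At a nonsingular `p`-adic zero, scaled to be
integral, the strict derivative of `x ↦ (F(x), x_j)_{j ∉ J}` is onto for a suitable `J` of size at
most `n`, so the coordinates outside `J` can be prescribed freely nearby. This produces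
`≫ p^{H(s-n)}` solutions modulo `p^H`, so each factor is positive
(`exists_density_prime_pow_ge`). The factors are `1 + ε_p` with `∑ |ε_p| < ∞`, so the sum of their
logarithms converges and the product is the exponential of a real number.
-/

open MeasureTheory Finset

noncomputable def e (θ : ℝ) : ℂ := Complex.exp (2 * Real.pi * Complex.I * θ)

/-- The diagonal form `F_i(t) = ∑_j u_{i,j} t_j^{k_i}` over a commutative ring. -/
noncomputable def dF {R : Type*} [CommRing R] {n s : ℕ} (k : Fin n → ℕ)
    (u : Fin n → Fin s → ℤ) (i : Fin n) (t : Fin s → R) : R :=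
  ∑ j, (u i j : R) * t j ^ k i

noncomputable def NF {n s : ℕ} (k : Fin n → ℕ) (u : Fin n → Fin s → ℤ) (X : ℝ) : ℕ :=
  Nat.card {x : Fin s → ℤ | (∀ j, |(x j : ℝ)| ≤ X) ∧ ∀ i, dF k u i x = 0}

noncomputable def singIntInner {n s : ℕ} (k : Fin n → ℕ) (u : Fin n → Fin s → ℤ)
    (β : Fin n → ℝ) : ℂ :=
  ∫ t in Set.Icc (fun _ : Fin s => (-1 : ℝ)) (fun _ => 1),
    e (∑ i, β i * dF k u i t)

noncomputable def singInt {n s : ℕ} (k : Fin n → ℕ) (u : Fin n → Fin s → ℤ) : ℂ :=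
  ∫ β : Fin n → ℝ, singIntInner k u β

noncomputable def singSerTerm {n s : ℕ} (k : Fin n → ℕ) (u : Fin n → Fin s → ℤ)
    (q : ℕ) : ℂ :=
  (1 / (q : ℂ) ^ s) *
    ∑ a ∈ (Fintype.piFinset fun _ : Fin n => Finset.Icc 1 q).filter
        (fun a => Nat.gcd (Finset.univ.gcd a) q = 1),
      ∑ r ∈ Fintype.piFinset fun _ : Fin s => Finset.Icc 1 q,
        e ((∑ i, (a i : ℝ) * ((dF k u i fun j => ((r j : ℤ))) : ℝ)) / q)

noncomputable def singSer {n s : ℕ} (k : Fin n → ℕ) (u : Fin n → Fin s → ℤ) : ℂ :=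
  ∑' q : ℕ, singSerTerm k u (q + 1)

/-- A nonsingular solution of the system `F = 0` over a field `K`. -/
def NonsingularSol {K : Type*} [Field K] {n s : ℕ} (k : Fin n → ℕ)
    (u : Fin n → Fin s → ℤ) (η : Fin s → K) : Prop :=
  (∀ i, dF k u i η = 0) ∧
    (Matrix.of fun i j => (k i : K) * (u i j : K) * η j ^ (k i - 1)).rank = n


/-! ### Additive characters and complete exponential sums in one variable -/

lemma e_add (a b : ℝ) : e (a + b) = e a * e b := by
  simp only [e, ← Complex.exp_add]; push_cast; ring_nf

lemma e_int (m : ℤ) : e (m : ℝ) = 1 := by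
  have := Complex.exp_int_mul_two_pi_mul_I m
  rw [e, ← this]; push_cast; ring_nf

lemma norm_e (a : ℝ) : ‖e a‖ = 1 := by
  have : 2 * Real.pi * Complex.I * (a : ℂ) = ((2 * Real.pi * a : ℝ) : ℂ) * Complex.I := by
    push_cast; ring
  rw [e, this, Complex.norm_exp_ofReal_mul_I]

lemma e_div_eq_stdAddChar (q : ℕ) [NeZero q] (m : ℤ) :
    e ((m : ℝ) / q) = ZMod.stdAddChar (m : ZMod q) := by
  rw [ZMod.stdAddChar_coe, e]; push_cast; ring_nf

lemma e_div_add_mul (q : ℕ) (hq : q ≠ 0) (a b : ℤ) :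
    e (((a + q * b : ℤ) : ℝ) / q) = e ((a : ℝ) / q) := by
  have hq' : (q : ℝ) ≠ 0 := by exact_mod_cast hq
  have : (((a + q * b : ℤ) : ℝ) / q) = (a : ℝ) / q + (b : ℤ) := by
    push_cast; field_simp
  rw [this, e_add, e_int, mul_one]

/-- The complete exponential sum `∑_{x mod q} e(f(x)/q)` of an integer polynomial. -/
noncomputable def expSum (q : ℕ) (f : Polynomial ℤ) : ℂ :=
  ∑ x ∈ Finset.range q, e (((f.eval (x : ℤ) : ℤ) : ℝ) / q)

lemma norm_expSum_le (q : ℕ) (f : Polynomial ℤ) : ‖expSum q f‖ ≤ q := by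
  refine (norm_sum_le _ _).trans ?_
  simp [norm_e]

lemma sum_range_mul_eq {M : Type*} [AddCommMonoid M] (g : ℕ → M) (m n : ℕ) :
    ∑ x ∈ Finset.range (m * n), g x
      = ∑ y ∈ Finset.range m, ∑ z ∈ Finset.range n, g (y + m * z) := by
  rw [Finset.sum_comm]
  induction n with
  | zero => simp
  | succ n ih =>
    rw [Nat.mul_succ, Finset.sum_range_add, ih, Finset.sum_range_succ]
    congr 1
    exact Finset.sum_congr rfl fun x _ => by rw [add_comm]

lemma e_eval_add_mul (q : ℕ) (hq : q ≠ 0) (f : Polynomial ℤ) (x y : ℤ) :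
    e (((f.eval (x + q * y) : ℤ) : ℝ) / q) = e (((f.eval x : ℤ) : ℝ) / q) := by
  obtain ⟨c, hc⟩ := f.sub_dvd_eval_sub (x + q * y) x
  have : f.eval (x + q * y) = f.eval x + q * (y * c) := by
    linear_combination hc
  rw [this, e_div_add_mul q hq]

/-- Summing the summand of modulus `d` over `d * g` consecutive integers. -/
lemma sum_range_mul_expSum (d g : ℕ) (hd : d ≠ 0) (f : Polynomial ℤ) :
    ∑ x ∈ Finset.range (d * g), e (((f.eval (x : ℤ) : ℤ) : ℝ) / d) = g * expSum d f := by
  rw [sum_range_mul_eq, Finset.sum_comm, expSum]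
  have : ∀ z ∈ Finset.range g, ∑ y ∈ Finset.range d,
      e (((f.eval ((y + d * z : ℕ) : ℤ) : ℤ) : ℝ) / d)
        = ∑ y ∈ Finset.range d, e (((f.eval (y : ℤ) : ℤ) : ℝ) / d) := by
    intro z _
    refine Finset.sum_congr rfl fun y _ => ?_
    have := e_eval_add_mul d hd f y z
    push_cast at this ⊢
    exact this
  rw [Finset.sum_congr rfl this]
  simp

/-- A common factor of the modulus and the polynomial can be removed. -/
lemma expSum_mul (d g : ℕ) (hd : d ≠ 0) (hg : g ≠ 0) (f : Polynomial ℤ) :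
    expSum (d * g) (Polynomial.C (g : ℤ) * f) = g * expSum d f := by
  rw [← sum_range_mul_expSum d g hd, expSum]
  refine Finset.sum_congr rfl fun x _ => ?_
  congr 1
  have : (g : ℝ) ≠ 0 := by exact_mod_cast hg
  have : (d : ℝ) ≠ 0 := by exact_mod_cast hd
  simp only [Polynomial.eval_mul, Polynomial.eval_C]
  push_cast
  field_simp

lemma map_sum_stdAddChar {ι : Type*} (q : ℕ) [NeZero q] (t : Finset ι) (f : ι → ZMod q) :
    (ZMod.stdAddChar (∑ i ∈ t, f i) : ℂ) = ∏ i ∈ t, ZMod.stdAddChar (f i) := by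
  classical
  induction t using Finset.induction_on with
  | empty => simp
  | insert a t ha ih => rw [Finset.sum_insert ha, Finset.prod_insert ha, AddChar.map_add_eq_mul, ih]

/-- Orthogonality of additive characters on `(ℤ/q)^ι`. -/
lemma sum_stdAddChar_pi {ι : Type*} [Fintype ι] [DecidableEq ι] (q : ℕ) [NeZero q]
    (v : ι → ZMod q) :
    ∑ c : ι → ZMod q, (ZMod.stdAddChar (∑ i, c i * v i) : ℂ)
      = if v = 0 then (q : ℂ) ^ Fintype.card ι else 0 := by
  have h1 : ∀ c : ι → ZMod q, (ZMod.stdAddChar (∑ i, c i * v i) : ℂ)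
      = ∏ i, ZMod.stdAddChar (c i * v i) := fun c => by
    exact map_sum_stdAddChar q _ _
  simp_rw [h1]
  rw [← Fintype.piFinset_univ, ← Finset.prod_univ_sum (fun _ : ι => (Finset.univ : Finset (ZMod q)))
    (fun i c => (ZMod.stdAddChar (c * v i) : ℂ))]
  have h2 : ∀ i, ∑ c : ZMod q, (ZMod.stdAddChar (c * v i) : ℂ) = if v i = 0 then (q : ℂ) else 0 := by
    intro i
    rw [AddChar.sum_mulShift _ (ZMod.isPrimitive_stdAddChar q)]
    simp
  simp_rw [h2]
  split_ifs with h
  · simp [h]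
  · obtain ⟨i, hi⟩ := Function.ne_iff.mp h
    exact Finset.prod_eq_zero (Finset.mem_univ i) (if_neg hi)

/-! ### Mordell's bound for exponential sums modulo a prime -/

section Mordell

open Polynomial

/-- By Newton's identities, power sums up to the number of variables determine the elementary
symmetric functions when the characteristic is larger. -/
lemma esymm_eq_of_psum_eq (p : ℕ) [Fact p.Prime] (k : ℕ) (hk : k < p) (x y : Fin k → ZMod p)
    (h : ∀ j, 1 ≤ j → j ≤ k → ∑ i, x i ^ j = ∑ i, y i ^ j) (j : ℕ) (hj : j ≤ k) :
    MvPolynomial.aeval x (MvPolynomial.esymm (Fin k) (ZMod p) j)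
      = MvPolynomial.aeval y (MvPolynomial.esymm (Fin k) (ZMod p) j) := by
  induction j using Nat.strong_induction_on with
  | _ j ih =>
    rcases Nat.eq_zero_or_pos j with rfl | hpos
    · simp [MvPolynomial.esymm_zero]
    have hne : (j : ZMod p) ≠ 0 := by
      rw [Ne, ZMod.natCast_eq_zero_iff]
      exact fun hd => absurd (Nat.le_of_dvd hpos hd) (by omega)
    have N := MvPolynomial.mul_esymm_eq_sum (Fin k) (ZMod p) j
    have Nx := congrArg (MvPolynomial.aeval x) N
    have Ny := congrArg (MvPolynomial.aeval y) N
    simp only [map_mul, map_natCast, map_pow, map_neg, map_one, map_sum] at Nx Ny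
    apply mul_left_cancel₀ hne
    rw [Nx, Ny]
    congr 1
    refine Finset.sum_congr rfl fun a ha => ?_
    rw [Finset.mem_filter, Finset.HasAntidiagonal.mem_antidiagonal] at ha
    rw [ih a.1 ha.2 (by omega)]
    congr 1
    simp only [MvPolynomial.psum, map_sum, map_pow, MvPolynomial.aeval_X]
    exact h a.2 (by omega) (by omega)

lemma mem_image_of_psum_eq (p : ℕ) [Fact p.Prime] (k : ℕ) (hk : k < p) (x y : Fin k → ZMod p)
    (h : ∀ j, 1 ≤ j → j ≤ k → ∑ i, x i ^ j = ∑ i, y i ^ j) (l : Fin k) :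
    y l ∈ Finset.univ.image x := by
  have hx := Multiset.prod_X_sub_X_eq_sum_esymm (Finset.univ.val.map x)
  have hy := Multiset.prod_X_sub_X_eq_sum_esymm (Finset.univ.val.map y)
  have hxy : ((Finset.univ.val.map x).map fun t => X - C t).prod
      = ((Finset.univ.val.map y).map fun t => X - C t).prod := by
    rw [hx, hy]
    simp only [Multiset.card_map, Finset.card_val, Finset.card_univ, Fintype.card_fin]
    refine Finset.sum_congr rfl fun j hj => ?_
    rw [← MvPolynomial.aeval_esymm_eq_multiset_esymm (Fin k) (ZMod p),
      ← MvPolynomial.aeval_esymm_eq_multiset_esymm (Fin k) (ZMod p),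
      esymm_eq_of_psum_eq p k hk x y h j (by simp at hj; omega)]
  have h1 := congrArg (Polynomial.eval (y l)) hxy
  simp only [Multiset.map_map] at h1
  change Polynomial.eval (y l) (∏ i, (X - C (x i))) = Polynomial.eval (y l) (∏ i, (X - C (y i))) at h1
  rw [Polynomial.eval_prod, Polynomial.eval_prod] at h1
  simp only [eval_sub, eval_X, eval_C] at h1
  rw [Finset.prod_eq_zero (f := fun i => y l - y i) (Finset.mem_univ l) (sub_self _),
    Finset.prod_eq_zero_iff] at h1
  obtain ⟨i, -, hi⟩ := h1
  exact Finset.mem_image.mpr ⟨i, Finset.mem_univ _, (sub_eq_zero.mp hi).symm⟩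

/-- The exponential sum with phase `∑_j c_j x^{j+1}` over `ℤ/p`. -/
noncomputable def coeffSum (p : ℕ) [NeZero p] {k : ℕ} (c : Fin k → ZMod p) : ℂ :=
  ∑ x : ZMod p, ZMod.stdAddChar (∑ j : Fin k, c j * x ^ (j.val + 1))

/-- Mean value estimate: the moment of order `2 * k` counts pairs of `k`-tuples with equal power sums. -/
lemma sum_norm_coeffSum_pow_le (p : ℕ) [Fact p.Prime] (k : ℕ) (hk : k < p) :
    ∑ c : Fin k → ZMod p, ‖coeffSum p c‖ ^ (2 * k) ≤ (p : ℝ) ^ k * ((p : ℝ) ^ k * (k : ℝ) ^ k) := by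
  classical
  set v : (Fin k → ZMod p) → Fin k → ZMod p := fun x j => ∑ i, x i ^ (j.val + 1) with hv
  have hpow : ∀ c : Fin k → ZMod p,
      coeffSum p c ^ k = ∑ x : Fin k → ZMod p, (ZMod.stdAddChar (∑ j, c j * v x j) : ℂ) := by
    intro c
    rw [coeffSum, Fintype.sum_pow]
    refine Finset.sum_congr rfl fun x _ => ?_
    rw [← map_sum_stdAddChar, Finset.sum_comm]
    simp only [hv, Finset.mul_sum]
  have hterm : ∀ c : Fin k → ZMod p, ((‖coeffSum p c‖ ^ (2 * k) : ℝ) : ℂ)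
      = ∑ x : Fin k → ZMod p, ∑ y : Fin k → ZMod p,
        (ZMod.stdAddChar (∑ j, c j * (v x j - v y j)) : ℂ) := by
    intro c
    have : ((‖coeffSum p c‖ ^ (2 * k) : ℝ) : ℂ)
        = coeffSum p c ^ k * (starRingEnd ℂ) (coeffSum p c ^ k) := by
      rw [Complex.mul_conj, Complex.normSq_eq_norm_sq, norm_pow, ← pow_mul, mul_comm 2 k]
    rw [this, hpow, map_sum, Finset.sum_mul_sum]
    refine Finset.sum_congr rfl fun x _ => Finset.sum_congr rfl fun y _ => ?_
    rw [← AddChar.map_neg_eq_conj, ← AddChar.map_add_eq_mul]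
    congr 1
    simp only [mul_sub, Finset.sum_sub_distrib]
    ring
  have htot : ((∑ c : Fin k → ZMod p, ‖coeffSum p c‖ ^ (2 * k) : ℝ) : ℂ)
      = ((∑ x : Fin k → ZMod p, (((Finset.univ.filter fun y : Fin k → ZMod p => v x = v y).card : ℝ)
          * (p : ℝ) ^ k) : ℝ) : ℂ) := by
    rw [Complex.ofReal_sum]
    simp_rw [hterm]
    rw [Finset.sum_comm, Complex.ofReal_sum]
    refine Finset.sum_congr rfl fun x _ => ?_
    rw [Finset.sum_comm]
    have : ∀ y : Fin k → ZMod p, ∑ c : Fin k → ZMod p,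
        (ZMod.stdAddChar (∑ j, c j * (v x j - v y j)) : ℂ)
          = if v x = v y then (p : ℂ) ^ k else 0 := by
      intro y
      rw [sum_stdAddChar_pi p (fun j => v x j - v y j)]
      have hiff : (fun j => v x j - v y j) = 0 ↔ v x = v y := by
        rw [← sub_eq_zero (a := v x)]; rfl
      simp only [hiff, Fintype.card_fin]
    simp_rw [this]
    rw [← Finset.sum_filter, Finset.sum_const, nsmul_eq_mul]
    push_cast; rfl
  rw [Complex.ofReal_inj.mp htot, ← Finset.sum_mul, mul_comm]
  refine mul_le_mul_of_nonneg_left ?_ (by positivity)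
  calc ∑ x : Fin k → ZMod p, ((Finset.univ.filter fun y : Fin k → ZMod p => v x = v y).card : ℝ)
      ≤ ∑ x : Fin k → ZMod p, (k : ℝ) ^ k := by
        refine Finset.sum_le_sum fun x _ => ?_
        have hsub : (Finset.univ.filter fun y : Fin k → ZMod p => v x = v y)
            ⊆ Fintype.piFinset fun _ : Fin k => Finset.univ.image x := by
          intro y hy
          simp only [Finset.mem_filter, Finset.mem_univ, true_and] at hy
          rw [Fintype.mem_piFinset]
          intro l
          refine mem_image_of_psum_eq p k hk x y (fun j hj1 hjk => ?_) l
          have := congrFun hy ⟨j - 1, by omega⟩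
          simp only [hv] at this
          rwa [Nat.sub_add_cancel hj1] at this
        have h1 := Finset.card_le_card hsub
        rw [Fintype.card_piFinset, Finset.prod_const, Finset.card_univ, Fintype.card_fin] at h1
        have h2 : (Finset.univ.image x).card ≤ k := by
          simpa using Finset.card_image_le (s := (Finset.univ : Finset (Fin k))) (f := x)
        exact_mod_cast h1.trans (Nat.pow_le_pow_left h2 k)
    _ = (p : ℝ) ^ k * (k : ℝ) ^ k := by
        simp [Finset.card_univ, ZMod.card]

/-- The exponential sum of a polynomial over `ℤ/p`. -/
noncomputable def polySum (p : ℕ) [NeZero p] (f : (ZMod p)[X]) : ℂ :=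
  ∑ x : ZMod p, ZMod.stdAddChar (f.eval x)

lemma norm_coeffSum_eq (p : ℕ) [NeZero p] (k : ℕ) (g : (ZMod p)[X]) (hg : g.natDegree ≤ k) :
    ‖coeffSum p (fun j : Fin k => g.coeff (j.val + 1))‖ = ‖polySum p g‖ := by
  have h : polySum p g = ZMod.stdAddChar (g.coeff 0)
      * coeffSum p (fun j : Fin k => g.coeff (j.val + 1)) := by
    rw [polySum, coeffSum, Finset.mul_sum]
    refine Finset.sum_congr rfl fun x _ => ?_
    rw [← AddChar.map_add_eq_mul, Polynomial.eval_eq_sum_range' (Nat.lt_succ_of_le hg),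
      Finset.sum_range_succ', Finset.sum_range]
    simp [add_comm]
  rw [h, norm_mul, AddChar.norm_apply, one_mul]

lemma polySum_comp (p : ℕ) [Fact p.Prime] (f : (ZMod p)[X]) (a b : ZMod p) (ha : a ≠ 0) :
    polySum p ((taylor b f).comp (C a * X)) = polySum p f := by
  rw [polySum, polySum]
  simp only [eval_comp, eval_mul, eval_C, eval_X, taylor_eval]
  exact Fintype.sum_equiv ((Equiv.mulLeft₀ a ha).trans (Equiv.addRight b)) _ _ (fun x => rfl)

lemma coeff_taylor_pred (p : ℕ) [Fact p.Prime] (f : (ZMod p)[X]) (hd : 2 ≤ f.natDegree)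
    (b : ZMod p) : (taylor b f).coeff (f.natDegree - 1)
      = f.coeff (f.natDegree - 1) + f.natDegree * f.leadingCoeff * b := by
  rw [taylor_coeff, Polynomial.eval_eq_sum_range' (n := 2)]
  · simp only [Finset.sum_range_succ, Finset.sum_range_zero, hasseDeriv_coeff]
    have h : 1 + (f.natDegree - 1) = f.natDegree := by omega
    have h2 : f.natDegree.choose (f.natDegree - 1) = f.natDegree := by
      rw [Nat.choose_symm (by omega), Nat.choose_one_right]
    rw [h, h2]
    simp
  · have := natDegree_hasseDeriv_le f (f.natDegree - 1)
    omega

/-- The affine substitutions `x ↦ a x + b` produce at least `p (p - 1) / k` distinct polynomials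
from one polynomial of degree between `2` and `k`, each with the same sum. -/
lemma card_substitutions_le (p : ℕ) [Fact p.Prime] (k : ℕ) (hk : k < p) (f : (ZMod p)[X])
    (hd : 2 ≤ f.natDegree) (hfk : f.natDegree ≤ k) :
    (p - 1) * p ≤ k * (((Finset.univ.filter fun a : ZMod p => a ≠ 0) ×ˢ
      (Finset.univ : Finset (ZMod p))).image fun ab => fun j : Fin k =>
        ((taylor ab.2 f).comp (C ab.1 * X)).coeff (j.val + 1)).card := by
  classical
  set s := (Finset.univ.filter fun a : ZMod p => a ≠ 0) ×ˢ (Finset.univ : Finset (ZMod p)) with hs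
  have hcard : s.card = (p - 1) * p := by
    rw [hs, Finset.card_product, Finset.filter_ne', Finset.card_erase_of_mem (Finset.mem_univ _),
      Finset.card_univ, ZMod.card]
  have hlead : f.leadingCoeff ≠ 0 := by
    rw [Ne, leadingCoeff_eq_zero]; rintro rfl; simp at hd
  have hdne : (f.natDegree : ZMod p) ≠ 0 := by
    rw [Ne, ZMod.natCast_eq_zero_iff]
    exact fun h => absurd (Nat.le_of_dvd (by omega) h) (by omega)
  rw [← hcard]
  refine Finset.card_le_mul_card_image s k fun c _ => ?_
  set d := f.natDegree with hdef
  -- on a fibre, the coefficients of degree `d` and `d - 1` are prescribed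
  have key : ∀ ab ∈ s.filter (fun ab => (fun j : Fin k =>
        ((taylor ab.2 f).comp (C ab.1 * X)).coeff (j.val + 1)) = c),
      ab.1 ≠ 0 ∧ f.leadingCoeff * ab.1 ^ d = c ⟨d - 1, by omega⟩ ∧
      (f.coeff (d - 1) + d * f.leadingCoeff * ab.2) * ab.1 ^ (d - 1) = c ⟨d - 2, by omega⟩ := by
    rintro ⟨a, b⟩ hab
    simp only [Finset.mem_filter, hs, Finset.mem_product, Finset.mem_univ, true_and,
      and_true] at hab
    refine ⟨hab.1, ?_, ?_⟩
    · have := congrFun hab.2 ⟨d - 1, by omega⟩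
      simp only [comp_C_mul_X_coeff] at this
      rw [← this, Nat.sub_add_cancel (by omega)]
      congr 1
      conv_rhs => rw [hdef, ← natDegree_taylor f b]
      rw [coeff_natDegree, leadingCoeff_taylor]
    · have := congrFun hab.2 ⟨d - 2, by omega⟩
      simp only [comp_C_mul_X_coeff] at this
      rw [← this, show d - 2 + 1 = d - 1 by omega, hdef, coeff_taylor_pred p f hd]
  calc _ ≤ (nthRoots d (c ⟨d - 1, by omega⟩ / f.leadingCoeff)).toFinset.card := by
        refine Finset.card_le_card_of_injOn Prod.fst ?_ ?_
        · intro ab hab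
          obtain ⟨-, h2, -⟩ := key ab hab
          simp only [Finset.mem_coe, Multiset.mem_toFinset]
          rw [mem_nthRoots (by omega), ← h2, mul_div_cancel_left₀ _ hlead]
        · intro ab hab ab' hab' heq
          obtain ⟨h1, -, h3⟩ := key ab hab
          obtain ⟨-, -, h3'⟩ := key ab' hab'
          rw [← h3', heq] at h3
          have h4 := mul_right_cancel₀ (pow_ne_zero _ (heq ▸ h1)) h3
          have h5 := mul_left_cancel₀ (mul_ne_zero hdne hlead) (add_left_cancel h4)
          exact Prod.ext heq h5
    _ ≤ d := (Multiset.toFinset_card_le _).trans (card_nthRoots _ _)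
    _ ≤ k := hfk

/-- Mordell's bound: a sum of degree at most `k < p` is `O(p^{1-1/k})`; here `θ` is the number
`p^{1-1/k}`. -/
lemma norm_polySum_le (p : ℕ) [Fact p.Prime] (k : ℕ) (hk : k < p) (f : (ZMod p)[X])
    (hd : 1 ≤ f.natDegree) (hfk : f.natDegree ≤ k) (θ : ℝ) (hθ0 : 0 ≤ θ)
    (hθ : θ ^ k = (p : ℝ) ^ (k - 1)) : ‖polySum p f‖ ≤ 2 * k * θ := by
  classical
  have hp := (Fact.out : p.Prime)
  have hk1 : 1 ≤ k := hd.trans hfk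
  rcases Nat.lt_or_ge f.natDegree 2 with h1 | h2
  · -- a linear phase sums to zero
    have hdeg : f.natDegree = 1 := by omega
    have hc : f.coeff 1 ≠ 0 := by
      have : f.leadingCoeff ≠ 0 := by
        rw [Ne, leadingCoeff_eq_zero]; rintro rfl; simp at hdeg
      rwa [leadingCoeff, hdeg] at this
    have : polySum p f = 0 := by
      have hx : ∀ x : ZMod p, (ZMod.stdAddChar (f.eval x) : ℂ)
          = ZMod.stdAddChar (f.coeff 0) * ZMod.stdAddChar (x * f.coeff 1) := by
        intro x
        rw [← AddChar.map_add_eq_mul, Polynomial.eval_eq_sum_range' h1]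
        simp [Finset.sum_range_succ, mul_comm]
      rw [polySum]
      simp_rw [hx]
      rw [← Finset.mul_sum, AddChar.sum_mulShift _ (ZMod.isPrimitive_stdAddChar p), if_neg hc]
      simp
    rw [this, norm_zero]; positivity
  · have hcard := card_substitutions_le p k hk f h2 hfk
    set T := ((Finset.univ.filter fun a : ZMod p => a ≠ 0) ×ˢ
      (Finset.univ : Finset (ZMod p))).image fun ab => fun j : Fin k =>
        ((taylor ab.2 f).comp (C ab.1 * X)).coeff (j.val + 1) with hT
    have hconst : ∀ c ∈ T, ‖coeffSum p c‖ ^ (2 * k) = ‖polySum p f‖ ^ (2 * k) := by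
      intro c hc
      simp only [hT, Finset.mem_image, Finset.mem_product, Finset.mem_filter, Finset.mem_univ,
        true_and, and_true] at hc
      obtain ⟨⟨a, b⟩, ha, rfl⟩ := hc
      rw [norm_coeffSum_eq p k, polySum_comp p f a b ha]
      refine (natDegree_comp_le).trans ?_
      rw [natDegree_taylor]
      calc _ ≤ f.natDegree * 1 := Nat.mul_le_mul_left _ ((natDegree_C_mul_le _ _).trans natDegree_X_le)
        _ ≤ k := by omega
    have hle : (T.card : ℝ) * ‖polySum p f‖ ^ (2 * k) ≤ (p : ℝ) ^ k * ((p : ℝ) ^ k * (k : ℝ) ^ k) := by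
      rw [← nsmul_eq_mul, ← Finset.sum_const, ← Finset.sum_congr rfl hconst]
      exact (Finset.sum_le_sum_of_subset_of_nonneg (Finset.subset_univ _)
        (fun _ _ _ => by positivity)).trans (sum_norm_coeffSum_pow_le p k hk)
    set Z := ‖polySum p f‖ ^ (2 * k) with hZ
    have hZ0 : 0 ≤ Z := by positivity
    have hp0 : (0 : ℝ) < p := by exact_mod_cast hp.pos
    have hp2 : (2 : ℝ) ≤ p := by exact_mod_cast hp.two_le
    have hcard' : ((p : ℝ) - 1) * p ≤ k * T.card := by
      have : (((p - 1) * p : ℕ) : ℝ) ≤ ((k * T.card : ℕ) : ℝ) := by exact_mod_cast hcard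
      rw [Nat.cast_mul, Nat.cast_mul, Nat.cast_sub hp.one_le] at this
      simpa using this
    have h3 : (p : ℝ) * p / 2 * Z ≤ k * ((p : ℝ) ^ k * ((p : ℝ) ^ k * (k : ℝ) ^ k)) :=
      calc (p : ℝ) * p / 2 * Z ≤ (k * T.card) * Z := by
            refine mul_le_mul_of_nonneg_right (le_trans ?_ hcard') hZ0
            nlinarith
        _ = k * (T.card * Z) := by ring
        _ ≤ _ := by gcongr
    have hpk : (p : ℝ) ^ k = p * θ ^ k := by
      rw [hθ, ← pow_succ', Nat.sub_add_cancel hk1]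
    have h4 : Z ≤ 2 * k * k ^ k * (θ ^ k) ^ 2 := by
      rw [hpk] at h3
      have h5 : (p : ℝ) * p * Z ≤ p * p * (2 * k * k ^ k * (θ ^ k) ^ 2) := by linarith
      exact le_of_mul_le_mul_left h5 (by positivity)
    have hk1' : (1 : ℝ) ≤ k := by exact_mod_cast hk1
    have h6 : Z ≤ (2 * k * θ) ^ (2 * k) := by
      have e1 : (2 * (k : ℝ) * θ) ^ (2 * k) = (2 * k) ^ k * ((2 * k) ^ k) * (θ ^ k) ^ 2 := by ring
      rw [e1]
      refine h4.trans (mul_le_mul_of_nonneg_right ?_ (by positivity))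
      have e2 : (2 : ℝ) * k ≤ (2 * k) ^ k := le_self_pow₀ (by linarith) (by omega)
      have e3 : (k : ℝ) ^ k ≤ (2 * k) ^ k := by gcongr; linarith
      exact mul_le_mul e2 e3 (by positivity) (by positivity)
    exact le_of_pow_le_pow_left₀ (by omega) (by positivity) h6

end Mordell

/-! ### Hua's bound for exponential sums modulo prime powers -/

section Hua

open Polynomial

lemma sum_range_natCast_zmod {M : Type*} [AddCommMonoid M] (q : ℕ) [NeZero q] (g : ZMod q → M) :
    ∑ x ∈ Finset.range q, g (x : ZMod q) = ∑ x : ZMod q, g x := by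
  refine Finset.sum_nbij' (fun x => (x : ZMod q)) ZMod.val ?_ ?_ ?_ ?_ ?_
  · intro x _; exact Finset.mem_univ _
  · intro x _; exact Finset.mem_range.mpr (ZMod.val_lt x)
  · intro x hx; exact ZMod.val_cast_of_lt (Finset.mem_range.mp hx)
  · intro x _; exact ZMod.natCast_zmod_val x
  · intro x _; rfl

lemma expSum_eq_polySum (q : ℕ) [NeZero q] (f : ℤ[X]) :
    expSum q f = polySum q (f.map (Int.castRingHom (ZMod q))) := by
  rw [expSum, polySum, ← sum_range_natCast_zmod]
  refine Finset.sum_congr rfl fun x _ => ?_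
  rw [e_div_eq_stdAddChar]
  congr 1
  simp

/-- A nonzero integer polynomial is a power of `p` times a polynomial nonzero modulo `p`. -/
lemma exists_eq_pow_mul_map_ne_zero (p : ℕ) [Fact p.Prime] (P : ℤ[X]) (hP : P ≠ 0) :
    ∃ (t : ℕ) (F : ℤ[X]), P = C ((p : ℤ) ^ t) * F ∧ F.map (Int.castRingHom (ZMod p)) ≠ 0 := by
  have hp := (Fact.out : p.Prime)
  have hprime : Prime (C (p : ℤ)) := (Polynomial.prime_C_iff).mpr (Nat.prime_iff_prime_int.mp hp)
  have hfin : FiniteMultiplicity (C (p : ℤ)) P := FiniteMultiplicity.of_prime_left hprime hP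
  obtain ⟨F, hF, hnd⟩ := hfin.exists_eq_pow_mul_and_not_dvd
  refine ⟨multiplicity (C (p : ℤ)) P, F, by rw [C_pow]; exact hF, fun h0 => hnd ?_⟩
  rw [C_dvd_iff_dvd_coeff]
  intro i
  have := congrArg (fun Q => Q.coeff i) h0
  simp only [coeff_map, coeff_zero, eq_intCast] at this
  exact (ZMod.intCast_zmod_eq_zero_iff_dvd _ _).mp this

lemma coeff_map_ne_zero_iff (p : ℕ) (f : ℤ[X]) (j : ℕ) :
    (f.map (Int.castRingHom (ZMod p))).coeff j ≠ 0 ↔ ¬ (p : ℤ) ∣ f.coeff j := by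
  rw [coeff_map, eq_intCast, Ne, ZMod.intCast_zmod_eq_zero_iff_dvd]

lemma expSum_linear_eq_zero (p : ℕ) [Fact p.Prime] (b : ℤ) (hb : ¬ (p : ℤ) ∣ b) :
    expSum p (C b * X) = 0 := by
  rw [expSum_eq_polySum, polySum]
  have : ((b : ℤ) : ZMod p) ≠ 0 := by rwa [Ne, ZMod.intCast_zmod_eq_zero_iff_dvd]
  have hx : ∀ x : ZMod p, ((C b * X : ℤ[X]).map (Int.castRingHom (ZMod p))).eval x
      = x * (b : ZMod p) := fun x => by simp [mul_comm]
  simp_rw [hx]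
  rw [AddChar.sum_mulShift _ (ZMod.isPrimitive_stdAddChar p), if_neg this]
  simp

/-- The part of the complete sum modulo `p^h` over the residue class of `μ` modulo `p`. -/
noncomputable def classSum (p h : ℕ) (f : ℤ[X]) (μ : ℤ) : ℂ :=
  ∑ z ∈ Finset.range (p ^ (h - 1)), e (((f.eval (μ + p * (z : ℤ)) : ℤ) : ℝ) / (p ^ h : ℕ))

lemma expSum_eq_sum_classSum (p h : ℕ) (hh : 1 ≤ h) (f : ℤ[X]) :
    expSum (p ^ h) f = ∑ μ ∈ Finset.range p, classSum p h f μ := by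
  have : p ^ h = p * p ^ (h - 1) := by rw [← pow_succ', Nat.sub_add_cancel hh]
  rw [expSum]
  conv_lhs => rw [show Finset.range (p ^ h) = Finset.range (p * p ^ (h - 1)) by rw [← this]]
  rw [sum_range_mul_eq]
  refine Finset.sum_congr rfl fun y _ => ?_
  rw [classSum]
  refine Finset.sum_congr rfl fun z _ => ?_
  push_cast; rfl

/-- Residue classes which are not critical modulo `p` contribute nothing, once the modulus is
large compared with the content of the derivative. -/
lemma classSum_eq_zero (p h t : ℕ) [Fact p.Prime] (f F : ℤ[X]) (μ : ℤ)
    (hf : derivative f = C ((p : ℤ) ^ t) * F) (hh : 2 * t + 2 ≤ h)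
    (hμ : ¬ (p : ℤ) ∣ F.eval μ) : classSum p h f μ = 0 := by
  have hp := (Fact.out : p.Prime)
  have hp0 : (p : ℝ) ≠ 0 := by exact_mod_cast hp.ne_zero
  obtain ⟨m, hm⟩ : ∃ m, h = m + 1 + t + 1 := ⟨h - t - 2, by omega⟩
  have h1 : p ^ (h - 1) = p ^ m * p ^ (t + 1) := by rw [← pow_add]; congr 1; omega
  rw [classSum, h1, sum_range_mul_eq]
  refine Finset.sum_eq_zero fun w _ => ?_
  set y : ℤ := μ + p * w with hy
  have hFy : ¬ (p : ℤ) ∣ F.eval y := by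
    intro hd
    apply hμ
    have h2 := F.sub_dvd_eval_sub y μ
    have h3 : (p : ℤ) ∣ F.eval y - F.eval μ := (Dvd.intro (w : ℤ) (by rw [hy]; ring)).trans h2
    exact (dvd_sub_right hd).mp h3
  have hterm : ∀ z ∈ Finset.range (p ^ (t + 1)),
      e (((f.eval (μ + p * ((w + p ^ m * z : ℕ) : ℤ)) : ℤ) : ℝ) / (p ^ h : ℕ))
        = e (((f.eval y : ℤ) : ℝ) / (p ^ h : ℕ))
          * e ((((C (F.eval y) * X : ℤ[X]).eval (z : ℤ) : ℤ) : ℝ) / p) := by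
    intro z _
    obtain ⟨c, hc⟩ := f.binomExpansion y ((p : ℤ) ^ (m + 1) * z)
    have harg : μ + p * ((w + p ^ m * z : ℕ) : ℤ) = y + (p : ℤ) ^ (m + 1) * z := by
      push_cast; rw [hy]; ring
    obtain ⟨d, hd⟩ : ∃ d, 2 * (m + 1) = h + d := ⟨2 * (m + 1) - h, by omega⟩
    have hval : f.eval (y + (p : ℤ) ^ (m + 1) * z)
        = (f.eval y + (p : ℤ) ^ (m + 1 + t) * (F.eval y * z))
          + ((p ^ h : ℕ) : ℤ) * ((p : ℤ) ^ d * (c * z ^ 2)) := by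
      rw [hc, hf]
      simp only [eval_mul, eval_C]
      have : (((p : ℤ) ^ (m + 1) * z) ^ 2 : ℤ) = (p : ℤ) ^ (2 * (m + 1)) * z ^ 2 := by ring
      rw [this, hd]
      push_cast
      ring
    rw [harg, hval, e_div_add_mul _ (pow_ne_zero _ hp.ne_zero), ← e_add]
    congr 1
    simp only [eval_mul, eval_C, eval_X]
    have : (p : ℝ) ^ h = (p : ℝ) ^ (m + 1 + t) * p := by rw [hm]; ring
    push_cast
    rw [this]
    field_simp
  rw [Finset.sum_congr rfl hterm, ← Finset.mul_sum, pow_succ', sum_range_mul_expSum _ _ hp.ne_zero,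
    expSum_linear_eq_zero p _ hFy, mul_zero, mul_zero]

/-- Rescaling at a residue class: `f(μ + pX) - f(μ) = p^σ g(X)` with `1 ≤ σ ≤ k` and `g` again
nonconstant modulo `p`. -/
lemma exists_rescale (p k : ℕ) [Fact p.Prime] (f : ℤ[X]) (hdeg : f.natDegree ≤ k)
    (hf : ∃ j, 1 ≤ j ∧ ¬ (p : ℤ) ∣ f.coeff j) (μ : ℤ) :
    ∃ (σ : ℕ) (g : ℤ[X]), 1 ≤ σ ∧ σ ≤ k ∧ g.natDegree ≤ k ∧
      (∃ j, 1 ≤ j ∧ ¬ (p : ℤ) ∣ g.coeff j) ∧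
      (taylor μ f).comp (C (p : ℤ) * X) = C (f.eval μ) + C ((p : ℤ) ^ σ) * g := by
  have hp := (Fact.out : p.Prime)
  have hpz : (p : ℤ) ≠ 0 := by exact_mod_cast hp.ne_zero
  -- the translate is still nonconstant modulo `p`
  obtain ⟨j, hj1, hj⟩ : ∃ j, 1 ≤ j ∧ ¬ (p : ℤ) ∣ (taylor μ f).coeff j := by
    by_contra hcon
    push Not at hcon
    obtain ⟨i, hi1, hi⟩ := hf
    set φ := Int.castRingHom (ZMod p)
    have h1 : (taylor μ f).map φ = C (φ ((taylor μ f).coeff 0)) := by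
      ext l
      rw [coeff_map, coeff_C]
      split_ifs with hl
      · rw [hl]
      · rw [eq_intCast, ZMod.intCast_zmod_eq_zero_iff_dvd]
        exact hcon l (by omega)
    have h2 : f.map φ = C (φ ((taylor μ f).coeff 0)) := by
      have h3 : f = taylor (-μ) (taylor μ f) := by
        rw [taylor_taylor]; simp
      conv_lhs => rw [h3, taylor_apply]
      rw [Polynomial.map_comp, h1, C_comp]
    apply (coeff_map_ne_zero_iff p f i).mpr hi
    rw [h2, coeff_C, if_neg (by omega)]
  set Q := (taylor μ f).comp (C (p : ℤ) * X) - C (f.eval μ) with hQ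
  have hQc : ∀ l, 1 ≤ l → Q.coeff l = (taylor μ f).coeff l * (p : ℤ) ^ l := by
    intro l hl
    rw [hQ, coeff_sub, comp_C_mul_X_coeff, coeff_C, if_neg (by omega), sub_zero]
  have hQ0 : Q.coeff 0 = 0 := by
    rw [hQ, coeff_sub, comp_C_mul_X_coeff, coeff_C_zero, taylor_coeff_zero]; simp
  have hQne : Q ≠ 0 := by
    intro h
    have := hQc j hj1
    rw [h, coeff_zero, eq_comm, mul_eq_zero] at this
    rcases this with h | h
    · exact hj (h ▸ dvd_zero _)
    · exact pow_ne_zero _ hpz h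
  obtain ⟨σ, g, hg, hgne⟩ := exists_eq_pow_mul_map_ne_zero p Q hQne
  have hgc : ∀ l, Q.coeff l = (p : ℤ) ^ σ * g.coeff l := fun l => by rw [hg, coeff_C_mul]
  have hjk : j ≤ k := by
    have : (taylor μ f).coeff j ≠ 0 := fun h => hj (h ▸ dvd_zero _)
    have := le_natDegree_of_ne_zero this
    rw [natDegree_taylor] at this
    omega
  have hg0 : g.coeff 0 = 0 := by
    have := hgc 0
    rw [hQ0, eq_comm, mul_eq_zero] at this
    exact this.resolve_left (pow_ne_zero _ hpz)
  have hgnc : ∃ l, 1 ≤ l ∧ ¬ (p : ℤ) ∣ g.coeff l := by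
    by_contra hcon
    push Not at hcon
    apply hgne
    ext l
    rw [coeff_map, coeff_zero, eq_intCast, ZMod.intCast_zmod_eq_zero_iff_dvd]
    rcases Nat.eq_zero_or_pos l with rfl | hl
    · rw [hg0]; exact dvd_zero _
    · exact hcon l hl
  have hprime : Prime (p : ℤ) := Nat.prime_iff_prime_int.mp hp
  refine ⟨σ, g, ?_, ?_, ?_, hgnc, ?_⟩
  · by_contra hσ
    obtain ⟨l, hl, hnd⟩ := hgnc
    apply hnd
    have := hgc l
    rw [hQc l hl, show σ = 0 by omega, pow_zero, one_mul] at this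
    rw [← this]
    exact Dvd.dvd.mul_left (dvd_pow_self _ (by omega)) _
  · refine le_trans ?_ hjk
    have h1 : (p : ℤ) ^ σ ∣ (p : ℤ) ^ j * (taylor μ f).coeff j :=
      ⟨g.coeff j, by rw [← hgc j, hQc j hj1, mul_comm]⟩
    have h2 : IsCoprime ((p : ℤ) ^ σ) ((taylor μ f).coeff j) :=
      ((Prime.coprime_iff_not_dvd hprime).mpr hj).pow_left
    exact (pow_dvd_pow_iff hpz hprime.not_isUnit).mp (h2.dvd_of_dvd_mul_right h1)
  · rw [natDegree_le_iff_coeff_eq_zero]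
    intro l hl
    have h1 := hgc l
    rw [hQc l (by omega), coeff_eq_zero_of_natDegree_lt (by rw [natDegree_taylor]; omega), zero_mul,
      eq_comm, mul_eq_zero] at h1
    exact h1.resolve_left (pow_ne_zero _ hpz)
  · rw [← hg, hQ]; ring

/-- The degree of the reduced derivative after rescaling at `μ` is at most the multiplicity of `μ`
as a root of the reduced derivative before. -/
lemma natDegree_rescale_le (p t t' σ : ℕ) [Fact p.Prime] (f F g G : ℤ[X]) (μ : ℤ)
    (hF : derivative f = C ((p : ℤ) ^ t) * F) (hG : derivative g = C ((p : ℤ) ^ t') * G)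
    (hF0 : F.map (Int.castRingHom (ZMod p)) ≠ 0)
    (hg : (taylor μ f).comp (C (p : ℤ) * X) = C (f.eval μ) + C ((p : ℤ) ^ σ) * g) :
    (G.map (Int.castRingHom (ZMod p))).natDegree
      ≤ (F.map (Int.castRingHom (ZMod p))).rootMultiplicity (μ : ZMod p) := by
  have hp := (Fact.out : p.Prime)
  have hpz : (p : ℤ) ≠ 0 := by exact_mod_cast hp.ne_zero
  have hprime : Prime (p : ℤ) := Nat.prime_iff_prime_int.mp hp
  set m := (F.map (Int.castRingHom (ZMod p))).rootMultiplicity (μ : ZMod p) with hm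
  have hmap : (taylor μ F).map (Int.castRingHom (ZMod p))
      = (F.map (Int.castRingHom (ZMod p))).comp (X + C (μ : ZMod p)) := by
    rw [taylor_apply, Polynomial.map_comp]; simp
  have hdm : ¬ (p : ℤ) ∣ (taylor μ F).coeff m := by
    rw [← coeff_map_ne_zero_iff, hmap, hm, rootMultiplicity_eq_natTrailingDegree]
    have hne : (F.map (Int.castRingHom (ZMod p))).comp (X + C (μ : ZMod p)) ≠ 0 := by
      rw [← taylor_apply]
      intro h
      exact hF0 ((taylor_injective (μ : ZMod p)) (h.trans (map_zero _).symm))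
    exact trailingCoeff_nonzero_iff_nonzero.mpr hne
  -- comparison of the derivatives coefficient by coefficient
  have hcoef : ∀ l, (p : ℤ) ^ (t + 1 + l) * (taylor μ F).coeff l = (p : ℤ) ^ (σ + t') * G.coeff l := by
    intro l
    have h1 := congrArg derivative hg
    rw [derivative_comp, derivative_add, derivative_C, zero_add, derivative_C_mul, derivative_C_mul,
      derivative_X, mul_one, hG] at h1
    have h2 : derivative (taylor μ f) = C ((p : ℤ) ^ t) * taylor μ F := by
      rw [taylor_apply, derivative_comp, hF, taylor_apply]
      simp
    rw [h2] at h1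
    have h3 := congrArg (fun P => P.coeff l) h1
    simp only [mul_comp, C_comp, coeff_C_mul, comp_C_mul_X_coeff] at h3
    rw [pow_add, pow_add, pow_add, pow_one]
    linear_combination h3
  have hle : σ + t' ≤ t + 1 + m := by
    have h1 : (p : ℤ) ^ (σ + t') ∣ (p : ℤ) ^ (t + 1 + m) * (taylor μ F).coeff m :=
      ⟨_, hcoef m⟩
    have h2 : IsCoprime ((p : ℤ) ^ (σ + t')) ((taylor μ F).coeff m) :=
      ((Prime.coprime_iff_not_dvd hprime).mpr hdm).pow_left
    exact (pow_dvd_pow_iff hpz hprime.not_isUnit).mp (h2.dvd_of_dvd_mul_right h1)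
  rw [natDegree_le_iff_coeff_eq_zero]
  intro l hl
  by_contra hcon
  rw [← Ne, coeff_map_ne_zero_iff] at hcon
  apply hcon
  obtain ⟨d, hd⟩ : ∃ d, t + 1 + l = σ + t' + (d + 1) := ⟨t + 1 + l - (σ + t') - 1, by omega⟩
  have h1 := hcoef l
  rw [hd, pow_add _ (σ + t'), mul_assoc] at h1
  have h2 := mul_left_cancel₀ (pow_ne_zero _ hpz) h1
  rw [← h2, pow_succ]
  exact Dvd.intro_left ((p : ℤ) ^ d * (taylor μ F).coeff l) (by ring)

lemma norm_classSum_le (p h : ℕ) (f : ℤ[X]) (μ : ℤ) : ‖classSum p h f μ‖ ≤ (p : ℝ) ^ (h - 1) := by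
  refine (norm_sum_le _ _).trans ?_
  simp [norm_e]

lemma norm_classSum_eq (p h σ : ℕ) [Fact p.Prime] (f g : ℤ[X]) (μ : ℤ) (hσ1 : 1 ≤ σ) (hσ : σ < h)
    (hg : (taylor μ f).comp (C (p : ℤ) * X) = C (f.eval μ) + C ((p : ℤ) ^ σ) * g) :
    ‖classSum p h f μ‖ = (p : ℝ) ^ (σ - 1) * ‖expSum (p ^ (h - σ)) g‖ := by
  have hp := (Fact.out : p.Prime)
  have hp0 : (p : ℝ) ≠ 0 := by exact_mod_cast hp.ne_zero
  have hterm : ∀ z ∈ Finset.range (p ^ (h - 1)),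
      e (((f.eval (μ + p * (z : ℤ)) : ℤ) : ℝ) / (p ^ h : ℕ))
        = e (((f.eval μ : ℤ) : ℝ) / (p ^ h : ℕ))
          * e (((g.eval (z : ℤ) : ℤ) : ℝ) / (p ^ (h - σ) : ℕ)) := by
    intro z _
    have h1 := congrArg (Polynomial.eval (z : ℤ)) hg
    simp only [eval_comp, eval_add, eval_mul, eval_C, eval_X, taylor_eval] at h1
    rw [add_comm μ, h1, ← e_add]
    congr 1
    have : (p : ℝ) ^ h = (p : ℝ) ^ σ * (p : ℝ) ^ (h - σ) := by rw [← pow_add]; congr 1; omega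
    push_cast
    rw [this]
    field_simp
  have hpw : p ^ (h - 1) = p ^ (h - σ) * p ^ (σ - 1) := by rw [← pow_add]; congr 1; omega
  rw [classSum, Finset.sum_congr rfl hterm, ← Finset.mul_sum, norm_mul, norm_e, one_mul, hpw,
    sum_range_mul_expSum _ _ (pow_ne_zero _ hp.ne_zero), norm_mul]
  simp

/-- Hua's bound with the degree of the reduced derivative carried along, which is what keeps the
constant bounded through the induction on `h`; here `θ = p^{1-1/k}`. -/
lemma norm_expSum_prime_pow_le_aux (p k : ℕ) [Fact p.Prime] (hk : 1 ≤ k) (θ : ℝ) (hθ1 : 1 ≤ θ)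
    (hθ : θ ^ k = (p : ℝ) ^ (k - 1)) (hθσ : ∀ σ, 1 ≤ σ → σ ≤ k → (p : ℝ) ^ (σ - 1) ≤ θ ^ σ)
    (K : ℝ) (hK1 : 1 ≤ K) (hK2 : 2 * (k : ℝ) ≤ K) (hK3 : (k : ℝ) ^ (2 * k + 1) ≤ K) (h : ℕ) :
    ∀ (f F : ℤ[X]) (t : ℕ), f.natDegree ≤ k → (∃ j, 1 ≤ j ∧ ¬ (p : ℤ) ∣ f.coeff j) →
      derivative f = C ((p : ℤ) ^ t) * F → F.map (Int.castRingHom (ZMod p)) ≠ 0 →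
      ‖expSum (p ^ h) f‖
        ≤ K * max 1 ((F.map (Int.castRingHom (ZMod p))).natDegree : ℝ) * θ ^ h := by
  have hp := (Fact.out : p.Prime)
  have hp1 : (1 : ℝ) ≤ p := by exact_mod_cast hp.one_le
  induction h using Nat.strong_induction_on with
  | _ h ih =>
  intro f F t hdeg hf hF hF0
  set D := (F.map (Int.castRingHom (ZMod p))).natDegree with hD
  have hθh : ∀ l, (1 : ℝ) ≤ θ ^ l := fun l => one_le_pow₀ hθ1
  have hmax : (1 : ℝ) ≤ max 1 (D : ℝ) := le_max_left _ _
  -- the content of the derivative is at most `k`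
  have hpt : p ^ t ≤ k := by
    obtain ⟨j, hj1, hj⟩ := hf
    have hprime : Prime (p : ℤ) := Nat.prime_iff_prime_int.mp hp
    have h1 := congrArg (fun P => P.coeff (j - 1)) hF
    simp only [coeff_derivative, coeff_C_mul, Nat.sub_add_cancel hj1] at h1
    have h2 : (p : ℤ) ^ t ∣ f.coeff j * (j : ℤ) := by
      refine ⟨_, Eq.trans ?_ h1⟩
      congr 1
      have : ((j - 1 : ℕ) : ℤ) + 1 = j := by omega
      rw [this]
    have h3 : (p : ℤ) ^ t ∣ (j : ℤ) :=
      (((Prime.coprime_iff_not_dvd hprime).mpr hj).pow_left).dvd_of_dvd_mul_left h2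
    have h4 : p ^ t ∣ j := by exact_mod_cast h3
    have h5 : j ≤ f.natDegree := le_natDegree_of_ne_zero fun h => hj (h ▸ dvd_zero _)
    exact (Nat.le_of_dvd (by omega) h4).trans (h5.trans hdeg)
  rcases Nat.lt_or_ge h (2 * t + 2) with hsmall | hbig
  · suffices hb : ‖expSum (p ^ h) f‖ ≤ K * θ ^ h by
      refine hb.trans ?_
      refine mul_le_mul_of_nonneg_right ?_ (by linarith [hθh h])
      nlinarith
    rcases Nat.lt_or_ge k p with hkp | hkp
    · have ht : t = 0 := by
        by_contra ht
        have := Nat.le_self_pow ht p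
        omega
      obtain rfl | rfl : h = 0 ∨ h = 1 := by omega
      · refine (norm_expSum_le _ _).trans ?_
        simpa using hK1
      · rw [pow_one, pow_one, expSum_eq_polySum]
        obtain ⟨j, hj1, hj⟩ := hf
        have hdeg1 := le_natDegree_of_ne_zero ((coeff_map_ne_zero_iff p f j).mpr hj)
        refine (norm_polySum_le p k hkp _ (hj1.trans hdeg1) (natDegree_map_le.trans hdeg) θ
          (by linarith) hθ).trans ?_
        exact mul_le_mul_of_nonneg_right hK2 (by linarith)
    · have htk : t ≤ k := (Nat.lt_pow_self hp.one_lt).le.trans hpt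
      have h1 : (p : ℝ) ^ h ≤ (k : ℝ) ^ (2 * k + 1) := by
        have : p ^ h ≤ k ^ (2 * k + 1) :=
          (Nat.pow_le_pow_left hkp h).trans (Nat.pow_le_pow_right hk (by omega))
        exact_mod_cast this
      have h2 := norm_expSum_le (p ^ h) f
      push_cast at h2
      nlinarith [hθh h]
  · rw [expSum_eq_sum_classSum p h (by omega)]
    set Fb := F.map (Int.castRingHom (ZMod p)) with hFb
    have hclass : ∀ μ ∈ Finset.range p, ‖classSum p h f μ‖
        ≤ K * θ ^ h * (Fb.rootMultiplicity ((μ : ℕ) : ZMod p) : ℝ) := by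
      intro μ _
      by_cases hroot : (p : ℤ) ∣ F.eval (μ : ℤ)
      · have hm1 : (1 : ℝ) ≤ (Fb.rootMultiplicity ((μ : ℕ) : ZMod p) : ℝ) := by
          have : 0 < Fb.rootMultiplicity ((μ : ℕ) : ZMod p) := by
            rw [rootMultiplicity_pos hF0, IsRoot.def]
            have h1 : Fb.eval (Int.castRingHom (ZMod p) (μ : ℤ))
                = Int.castRingHom (ZMod p) (F.eval (μ : ℤ)) := Polynomial.eval_map_apply _ _
            rw [← ZMod.intCast_zmod_eq_zero_iff_dvd] at hroot
            rw [eq_intCast, eq_intCast, hroot, Int.cast_natCast] at h1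
            exact h1
          exact_mod_cast this
        obtain ⟨σ, g, hσ1, hσk, hgdeg, hgnc, hg⟩ := exists_rescale p k f hdeg hf μ
        rcases Nat.lt_or_ge σ h with hσh | hσh
        · rw [norm_classSum_eq p h σ f g μ hσ1 hσh hg]
          have hg'ne : derivative g ≠ 0 := by
            obtain ⟨j, hj1, hj⟩ := hgnc
            intro h0
            have h1 := congrArg (fun P => P.coeff (j - 1)) h0
            simp only [coeff_derivative, coeff_zero, Nat.sub_add_cancel hj1, mul_eq_zero] at h1
            rcases h1 with h1 | h1
            · exact hj (h1 ▸ dvd_zero _)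
            · omega
          obtain ⟨t', G, hG, hG0⟩ := exists_eq_pow_mul_map_ne_zero p _ hg'ne
          have hle := natDegree_rescale_le p t t' σ f F g G μ hF hG hF0 hg
          have hih := ih (h - σ) (by omega) g G t' hgdeg hgnc hG hG0
          have hmaxle : max 1 ((G.map (Int.castRingHom (ZMod p))).natDegree : ℝ)
              ≤ (Fb.rootMultiplicity ((μ : ℕ) : ZMod p) : ℝ) := by
            refine max_le hm1 ?_
            have : (((μ : ℕ) : ℤ) : ZMod p) = ((μ : ℕ) : ZMod p) := by simp
            rw [this] at hle
            exact_mod_cast hle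
          have hpow : θ ^ h = θ ^ σ * θ ^ (h - σ) := by rw [← pow_add]; congr 1; omega
          calc (p : ℝ) ^ (σ - 1) * ‖expSum (p ^ (h - σ)) g‖
              ≤ θ ^ σ * (K * (Fb.rootMultiplicity ((μ : ℕ) : ZMod p) : ℝ) * θ ^ (h - σ)) := by
                refine mul_le_mul (hθσ σ hσ1 hσk) (hih.trans ?_) (norm_nonneg _) (by positivity)
                gcongr
            _ = _ := by rw [hpow]; ring
        · refine (norm_classSum_le p h f μ).trans ((hθσ h (by omega) (by omega)).trans ?_)
          have := hθh h
          have h2 : θ ^ h ≤ K * θ ^ h := by nlinarith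
          nlinarith
      · rw [classSum_eq_zero p h t f F μ hF hbig hroot, norm_zero]
        have := hθh h
        positivity
    refine (norm_sum_le _ _).trans ((Finset.sum_le_sum hclass).trans ?_)
    rw [← Finset.mul_sum,
      sum_range_natCast_zmod p (fun x => (Fb.rootMultiplicity x : ℝ))]
    have hsum : ∑ x : ZMod p, Fb.rootMultiplicity x ≤ D := by
      classical
      calc ∑ x : ZMod p, Fb.rootMultiplicity x
          = ∑ x : ZMod p, Fb.roots.count x := by simp
        _ = Multiset.card Fb.roots := by
            exact Multiset.sum_count_eq_card fun a _ => Finset.mem_univ a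
        _ ≤ D := card_roots' _
    have hsum' : ∑ x : ZMod p, (Fb.rootMultiplicity x : ℝ) ≤ D := by exact_mod_cast hsum
    calc K * θ ^ h * ∑ x : ZMod p, (Fb.rootMultiplicity x : ℝ)
        ≤ K * θ ^ h * max 1 (D : ℝ) := by
          have := hθh h
          gcongr
          exact hsum'.trans (le_max_right _ _)
      _ = _ := by ring

/-- The number `p^{1-1/k}`. -/
noncomputable def theta (p k : ℕ) : ℝ := (p : ℝ) ^ (1 - 1 / (k : ℝ))

lemma one_le_theta (p k : ℕ) (hp : 1 ≤ p) (hk : 1 ≤ k) : 1 ≤ theta p k := by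
  have h1 : (1 : ℝ) ≤ p := by exact_mod_cast hp
  have h2 : (1 : ℝ) ≤ k := by exact_mod_cast hk
  refine Real.one_le_rpow h1 ?_
  rw [sub_nonneg, div_le_one (by linarith)]
  exact h2

lemma theta_pow_self (p k : ℕ) (hk : 1 ≤ k) : theta p k ^ k = (p : ℝ) ^ (k - 1) := by
  have h2 : (k : ℝ) ≠ 0 := by exact_mod_cast (by omega : k ≠ 0)
  rw [theta, ← Real.rpow_natCast, ← Real.rpow_mul (by positivity), ← Real.rpow_natCast]
  congr 1
  rw [Nat.cast_sub hk]
  field_simp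
  simp

lemma pow_pred_le_theta_pow (p k σ : ℕ) (hp : 1 ≤ p) (hk : 1 ≤ k) (h1 : 1 ≤ σ) (h2 : σ ≤ k) :
    (p : ℝ) ^ (σ - 1) ≤ theta p k ^ σ := by
  have hp' : (1 : ℝ) ≤ p := by exact_mod_cast hp
  have hk' : (0 : ℝ) < k := by exact_mod_cast hk
  rw [theta, ← Real.rpow_natCast, ← Real.rpow_natCast, ← Real.rpow_mul (by positivity)]
  refine Real.rpow_le_rpow_of_exponent_le hp' ?_
  rw [Nat.cast_sub h1]
  have : (σ : ℝ) ≤ k := by exact_mod_cast h2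
  have h3 : (σ : ℝ) / k ≤ 1 := (div_le_one hk').mpr this
  have : (1 - 1 / (k : ℝ)) * σ = σ - σ / k := by ring
  rw [this]; push_cast; linarith

/-- Hua's bound: `∑_{x mod p^h} e(f(x)/p^h) ≪_k p^{h(1-1/k)}` for polynomials of degree at most `k`
that are nonconstant modulo `p`, uniformly in `p`. -/
lemma exists_norm_expSum_prime_pow_le (k : ℕ) (hk : 1 ≤ k) :
    ∃ K : ℝ, 1 ≤ K ∧ ∀ (p : ℕ) [Fact p.Prime] (h : ℕ) (f : ℤ[X]), f.natDegree ≤ k →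
      (∃ j, 1 ≤ j ∧ ¬ (p : ℤ) ∣ f.coeff j) → ‖expSum (p ^ h) f‖ ≤ K * theta p k ^ h := by
  have hk' : (1 : ℝ) ≤ k := by exact_mod_cast hk
  set K0 : ℝ := 2 * k + (k : ℝ) ^ (2 * k + 1) with hK0
  have hpos : (0 : ℝ) ≤ (k : ℝ) ^ (2 * k + 1) := by positivity
  refine ⟨K0 * k, by nlinarith, ?_⟩
  intro p _ h f hdeg hf
  have hp := (Fact.out : p.Prime)
  have hne : derivative f ≠ 0 := by
    obtain ⟨j, hj1, hj⟩ := hf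
    intro h0
    have h1 := congrArg (fun P => P.coeff (j - 1)) h0
    simp only [coeff_derivative, coeff_zero, Nat.sub_add_cancel hj1, mul_eq_zero] at h1
    rcases h1 with h1 | h1
    · exact hj (h1 ▸ dvd_zero _)
    · omega
  obtain ⟨t, F, hF, hF0⟩ := exists_eq_pow_mul_map_ne_zero p _ hne
  have hth := one_le_theta p k hp.one_le hk
  refine (norm_expSum_prime_pow_le_aux p k hk (theta p k) hth
    (theta_pow_self p k hk) (fun σ => pow_pred_le_theta_pow p k σ hp.one_le hk) K0
    (by linarith) (by linarith) (by linarith) h f F t hdeg hf hF hF0).trans ?_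
  have hDk : ((F.map (Int.castRingHom (ZMod p))).natDegree : ℝ) ≤ k := by
    have h1 : F.natDegree ≤ k := by
      have hpz : (p : ℤ) ^ t ≠ 0 := pow_ne_zero _ (by exact_mod_cast hp.ne_zero)
      have h2 := natDegree_derivative_le f
      rw [hF, natDegree_C_mul hpz] at h2
      omega
    exact_mod_cast natDegree_map_le.trans h1
  gcongr
  exact max_le hk' hDk

end Hua

/-! ### The singular series as a Möbius transform of local solution densities -/

section Density

open Polynomial

variable {n s : ℕ}

/-- The one-variable phase `∑_i a_i u_{i,j} X^{k_i}` attached to the `j`-th variable. -/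
noncomputable def phasePoly (k : Fin n → ℕ) (u : Fin n → Fin s → ℤ) (a : Fin n → ℕ) (j : Fin s) :
    ℤ[X] :=
  ∑ i, C ((a i : ℤ) * u i j) * X ^ k i

/-- The contribution `q^{-s} ∑_r e(a · F(r)/q)` of a single `a`, in factored form. -/
noncomputable def normTerm (k : Fin n → ℕ) (u : Fin n → Fin s → ℤ) (q : ℕ) (a : Fin n → ℕ) : ℂ :=
  (1 / (q : ℂ) ^ s) * ∏ j, expSum q (phasePoly k u a j)

/-- The number of solutions of `F = 0` over `ℤ/q`. -/
noncomputable def solCount (k : Fin n → ℕ) (u : Fin n → Fin s → ℤ) (q : ℕ) : ℕ :=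
  Nat.card {r : Fin s → ZMod q // ∀ i, dF k u i r = 0}

lemma sum_Icc_natCast_zmod_pi {M : Type*} [AddCommMonoid M] (m q : ℕ) [NeZero q]
    (g : (Fin m → ZMod q) → M) :
    ∑ a ∈ Fintype.piFinset fun _ : Fin m => Finset.Icc 1 q, g (fun i => (a i : ZMod q))
      = ∑ a : Fin m → ZMod q, g a := by
  refine Finset.sum_nbij' (fun a i => (a i : ZMod q)) (fun a i => (a i - 1).val + 1) ?_ ?_ ?_ ?_ ?_
  · intro a _; exact Finset.mem_univ _
  · intro a _
    rw [Fintype.mem_piFinset]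
    intro i
    have := ZMod.val_lt (a i - 1)
    simp only [Finset.mem_Icc]; omega
  · intro a ha
    funext i
    have hi := (Fintype.mem_piFinset.mp ha) i
    simp only [Finset.mem_Icc] at hi
    have : ((a i : ZMod q) - 1) = ((a i - 1 : ℕ) : ZMod q) := by
      rw [Nat.cast_sub hi.1]; simp
    rw [this, ZMod.val_cast_of_lt (by omega)]; omega
  · intro a _
    funext i
    simp
  · intro a _; rfl

lemma sum_Icc_eq_expSum (q : ℕ) (hq : q ≠ 0) (f : ℤ[X]) :
    ∑ x ∈ Finset.Icc 1 q, e (((f.eval (x : ℤ) : ℤ) : ℝ) / q) = expSum q f := by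
  have h1 : ∑ x ∈ Finset.Icc 1 q, e (((f.eval (x : ℤ) : ℤ) : ℝ) / q)
      = ∑ x ∈ Finset.range q, e (((f.eval ((x + 1 : ℕ) : ℤ) : ℤ) : ℝ) / q) := by
    rw [Finset.range_eq_Ico, Finset.sum_Ico_add' (fun x : ℕ => e (((f.eval (x : ℤ) : ℤ) : ℝ) / q))]
    rfl
  have h2 := Finset.sum_range_succ (fun x : ℕ => e (((f.eval (x : ℤ) : ℤ) : ℝ) / q)) q
  rw [Finset.sum_range_succ'] at h2
  have h3 := e_eval_add_mul q hq f 0 1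
  simp only [zero_add, mul_one] at h3
  rw [h1, expSum]
  simp only [Nat.cast_zero] at h2
  rw [h3] at h2
  exact add_right_cancel h2

lemma sum_box_e_eq_prod (k : Fin n → ℕ) (u : Fin n → Fin s → ℤ) (q : ℕ) (hq : q ≠ 0)
    (a : Fin n → ℕ) :
    ∑ r ∈ Fintype.piFinset fun _ : Fin s => Finset.Icc 1 q,
        e ((∑ i, (a i : ℝ) * ((dF k u i fun j => ((r j : ℤ))) : ℝ)) / q)
      = ∏ j, expSum q (phasePoly k u a j) := by
  simp_rw [← sum_Icc_eq_expSum q hq]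
  rw [Finset.prod_univ_sum]
  refine Finset.sum_congr rfl fun r _ => ?_
  have hprod : ∀ (t : Finset (Fin s)) (g : Fin s → ℝ), e (∑ j ∈ t, g j) = ∏ j ∈ t, e (g j) := by
    intro t g
    classical
    induction t using Finset.induction_on with
    | empty => simp [e]
    | insert b t hb ih => rw [Finset.sum_insert hb, Finset.prod_insert hb, e_add, ih]
  rw [← hprod, ← Finset.sum_div]
  congr 2
  simp only [dF, phasePoly, eval_finsetSum, eval_mul, eval_C, eval_pow, eval_X, Finset.mul_sum]
  push_cast
  rw [Finset.sum_comm]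
  refine Finset.sum_congr rfl fun j _ => Finset.sum_congr rfl fun i _ => ?_
  ring

lemma singSerTerm_eq (k : Fin n → ℕ) (u : Fin n → Fin s → ℤ) (q : ℕ) (hq : q ≠ 0) :
    singSerTerm k u q = ∑ a ∈ (Fintype.piFinset fun _ : Fin n => Finset.Icc 1 q).filter
        (fun a => Nat.gcd (Finset.univ.gcd a) q = 1), normTerm k u q a := by
  rw [singSerTerm]
  simp_rw [sum_box_e_eq_prod k u q hq, normTerm]
  rw [Finset.mul_sum]

/-- Summing over all `a` modulo `q` detects the solutions of `F = 0` modulo `q`. -/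
lemma sum_normTerm_eq (k : Fin n → ℕ) (u : Fin n → Fin s → ℤ) (q : ℕ) (hq : q ≠ 0) :
    ∑ a ∈ Fintype.piFinset fun _ : Fin n => Finset.Icc 1 q, normTerm k u q a
      = (solCount k u q : ℂ) * (q : ℂ) ^ n / (q : ℂ) ^ s := by
  classical
  have : NeZero q := ⟨hq⟩
  simp_rw [normTerm, ← sum_box_e_eq_prod k u q hq]
  rw [← Finset.mul_sum, one_div, mul_comm, ← div_eq_mul_inv]
  congr 1
  have h1 : ∀ (a : Fin n → ℕ) (r : Fin s → ℕ),
      e ((∑ i, (a i : ℝ) * ((dF k u i fun j => ((r j : ℤ))) : ℝ)) / q)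
        = ZMod.stdAddChar (∑ i, (a i : ZMod q) * dF k u i (fun j => (r j : ZMod q))) := by
    intro a r
    have h2 : (∑ i, (a i : ℝ) * ((dF k u i fun j => ((r j : ℤ))) : ℝ))
        = ((∑ i, (a i : ℤ) * dF k u i (fun j => (r j : ℤ)) : ℤ) : ℝ) := by
      simp only [dF]; push_cast; rfl
    rw [h2, e_div_eq_stdAddChar]
    congr 1
    simp only [dF]; push_cast; rfl
  simp_rw [h1]
  rw [Finset.sum_comm, sum_Icc_natCast_zmod_pi s q (fun r => ∑ a ∈ Fintype.piFinset
    fun _ : Fin n => Finset.Icc 1 q,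
    (ZMod.stdAddChar (∑ i, (a i : ZMod q) * dF k u i r) : ℂ))]
  have h3 : ∀ r : Fin s → ZMod q, ∑ a ∈ Fintype.piFinset fun _ : Fin n => Finset.Icc 1 q,
      (ZMod.stdAddChar (∑ i, (a i : ZMod q) * dF k u i r) : ℂ)
        = if (∀ i, dF k u i r = 0) then (q : ℂ) ^ n else 0 := by
    intro r
    rw [sum_Icc_natCast_zmod_pi n q
      (fun a => (ZMod.stdAddChar (∑ i, a i * dF k u i r) : ℂ)),
      sum_stdAddChar_pi q (fun i => dF k u i r)]
    have : (fun i => dF k u i r) = 0 ↔ ∀ i, dF k u i r = 0 := funext_iff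
    simp only [this, Fintype.card_fin]
  simp_rw [h3]
  rw [← Finset.sum_filter, Finset.sum_const, nsmul_eq_mul, solCount, Nat.card_eq_fintype_card,
    Fintype.card_subtype]

lemma normTerm_mul (k : Fin n → ℕ) (u : Fin n → Fin s → ℤ) (d g : ℕ) (hd : d ≠ 0) (hg : g ≠ 0)
    (a : Fin n → ℕ) : normTerm k u (d * g) (fun i => g * a i) = normTerm k u d a := by
  have h1 : ∀ j, phasePoly k u (fun i => g * a i) j = C (g : ℤ) * phasePoly k u a j := by
    intro j
    rw [phasePoly, phasePoly, Finset.mul_sum]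
    refine Finset.sum_congr rfl fun i _ => ?_
    rw [← mul_assoc, ← C_mul]
    congr 2
    push_cast; ring
  have hd' : (d : ℂ) ≠ 0 := by exact_mod_cast hd
  have hg' : (g : ℂ) ≠ 0 := by exact_mod_cast hg
  rw [normTerm, normTerm]
  simp_rw [h1, expSum_mul d g hd hg]
  rw [Finset.prod_mul_distrib, Finset.prod_const, Finset.card_univ, Fintype.card_fin]
  push_cast
  field_simp
  ring

/-- Sorting the vectors `a` modulo `Q` by their exact denominator. -/
lemma sum_divisors_singSerTerm (k : Fin n → ℕ) (u : Fin n → Fin s → ℤ) (Q : ℕ) (hQ : Q ≠ 0) :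
    ∑ d ∈ Q.divisors, singSerTerm k u d = (solCount k u Q : ℂ) * (Q : ℂ) ^ n / (Q : ℂ) ^ s := by
  rw [← sum_normTerm_eq k u Q hQ]
  have hmaps : ∀ a ∈ Fintype.piFinset fun _ : Fin n => Finset.Icc 1 Q,
      Q / Nat.gcd (Finset.univ.gcd a) Q ∈ Q.divisors := by
    intro a _
    rw [Nat.mem_divisors]
    exact ⟨Nat.div_dvd_of_dvd (Nat.gcd_dvd_right _ _), hQ⟩
  rw [← Finset.sum_fiberwise_of_maps_to hmaps]
  refine Finset.sum_congr rfl fun d hd => ?_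
  obtain ⟨⟨g, rfl⟩, -⟩ := Nat.mem_divisors.mp hd
  have hd0 : d ≠ 0 := left_ne_zero_of_mul hQ
  have hg0 : g ≠ 0 := right_ne_zero_of_mul hQ
  have hgpos : 0 < g := Nat.pos_of_ne_zero hg0
  have hdpos : 0 < d := Nat.pos_of_ne_zero hd0
  have hgcd : ∀ a : Fin n → ℕ, Nat.gcd (Finset.univ.gcd (fun i => g * a i)) (d * g)
      = g * Nat.gcd (Finset.univ.gcd a) d := by
    intro a
    rw [Finset.gcd_mul_left, normalize_eq, mul_comm d g, Nat.gcd_mul_left]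
  rw [singSerTerm_eq k u d hd0]
  refine Finset.sum_bij (fun a _ i => g * a i) ?_ ?_ ?_ ?_
  · intro a ha
    simp only [Finset.mem_filter, Fintype.mem_piFinset, Finset.mem_Icc] at ha ⊢
    refine ⟨fun i => ⟨Nat.mul_pos hgpos (ha.1 i).1, ?_⟩, ?_⟩
    · rw [mul_comm d g]; exact Nat.mul_le_mul_left g (ha.1 i).2
    · rw [hgcd, ha.2, mul_one, Nat.mul_div_cancel _ hgpos]
  · intro a _ b _ hab
    funext i
    exact Nat.eq_of_mul_eq_mul_left hgpos (congrFun hab i)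
  · intro b hb
    simp only [Finset.mem_filter, Fintype.mem_piFinset, Finset.mem_Icc] at hb
    have hgb : Nat.gcd (Finset.univ.gcd b) (d * g) = g := by
      have h1 : Nat.gcd (Finset.univ.gcd b) (d * g) ∣ d * g := Nat.gcd_dvd_right _ _
      have h2 := Nat.div_mul_cancel h1
      rw [hb.2] at h2
      exact Nat.eq_of_mul_eq_mul_left hdpos h2
    have hdvd : ∀ i, g ∣ b i := fun i => by
      rw [← hgb]
      exact (Nat.gcd_dvd_left _ _).trans (Finset.gcd_dvd (Finset.mem_univ i))
    choose c hc using hdvd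
    have hbc : b = fun i => g * c i := funext hc
    refine ⟨c, ?_, hbc.symm⟩
    simp only [Finset.mem_filter, Fintype.mem_piFinset, Finset.mem_Icc]
    refine ⟨fun i => ?_, ?_⟩
    · have h1 := hb.1 i
      rw [hc i] at h1
      refine ⟨Nat.pos_of_mul_pos_left h1.1, ?_⟩
      rw [mul_comm d g] at h1
      exact Nat.le_of_mul_le_mul_left h1.2 hgpos
    · rw [hbc, hgcd] at hgb
      exact Nat.eq_of_mul_eq_mul_left hgpos (by rw [hgb, mul_one])
  · intro a _
    exact (normTerm_mul k u d g hd0 hg0 a).symm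

lemma dF_ringHom {R S : Type*} [CommRing R] [CommRing S] (φ : R →+* S) (k : Fin n → ℕ)
    (u : Fin n → Fin s → ℤ) (i : Fin n) (t : Fin s → R) :
    dF k u i (fun j => φ (t j)) = φ (dF k u i t) := by
  simp [dF, map_sum, map_mul, map_pow]

lemma solCount_mul (k : Fin n → ℕ) (u : Fin n → Fin s → ℤ) (a b : ℕ) (hab : Nat.Coprime a b) :
    solCount k u (a * b) = solCount k u a * solCount k u b := by
  rw [solCount, solCount, solCount, ← Nat.card_prod]
  set φ := ZMod.chineseRemainder hab
  have h1 : ∀ (r : Fin s → ZMod (a * b)) (i : Fin n), dF k u i r = 0 ↔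
      dF k u i (fun j => (φ (r j)).1) = 0 ∧ dF k u i (fun j => (φ (r j)).2) = 0 := by
    intro r i
    have e1 := dF_ringHom ((RingHom.fst (ZMod a) (ZMod b)).comp φ.toRingHom) k u i r
    have e2 := dF_ringHom ((RingHom.snd (ZMod a) (ZMod b)).comp φ.toRingHom) k u i r
    have e3 : dF k u i r = 0 ↔ φ (dF k u i r) = 0 := by simp
    rw [e3, Prod.ext_iff]
    change _ ↔ dF k u i (fun j => ((RingHom.fst (ZMod a) (ZMod b)).comp φ.toRingHom) (r j)) = 0 ∧
      dF k u i (fun j => ((RingHom.snd (ZMod a) (ZMod b)).comp φ.toRingHom) (r j)) = 0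
    rw [e1, e2]
    rfl
  refine Nat.card_congr
    { toFun := fun r => (⟨fun j => (φ (r.1 j)).1, fun i => ((h1 r.1 i).mp (r.2 i)).1⟩,
        ⟨fun j => (φ (r.1 j)).2, fun i => ((h1 r.1 i).mp (r.2 i)).2⟩)
      invFun := fun r => ⟨fun j => φ.symm (r.1.1 j, r.2.1 j), fun i => (h1 _ i).mpr
        ⟨by simpa using r.1.2 i, by simpa using r.2.2 i⟩⟩
      left_inv := ?_
      right_inv := ?_ }
  · intro r; ext j; simp
  · intro r; ext j <;> simp

/-- The normalised number of solutions modulo `q`. -/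
noncomputable def density (k : Fin n → ℕ) (u : Fin n → Fin s → ℤ) : ArithmeticFunction ℝ :=
  ⟨fun q => if q = 0 then 0 else (solCount k u q : ℝ) * (q : ℝ) ^ n / (q : ℝ) ^ s, if_pos rfl⟩

lemma density_apply (k : Fin n → ℕ) (u : Fin n → Fin s → ℤ) (q : ℕ) (hq : q ≠ 0) :
    density k u q = (solCount k u q : ℝ) * (q : ℝ) ^ n / (q : ℝ) ^ s := if_neg hq

lemma density_isMultiplicative (k : Fin n → ℕ) (u : Fin n → Fin s → ℤ) :
    (density k u).IsMultiplicative := by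
  rw [ArithmeticFunction.IsMultiplicative.iff_ne_zero]
  constructor
  · rw [density_apply _ _ _ one_ne_zero]
    have : solCount k u 1 = 1 := by
      rw [solCount, Nat.card_eq_one_iff_unique]
      refine ⟨⟨fun a b => Subtype.ext (funext fun j => Subsingleton.elim _ _)⟩,
        ⟨⟨fun _ => 0, fun i => Subsingleton.elim _ _⟩⟩⟩
    rw [this]; simp
  · intro a b ha hb hab
    have ha' : (a : ℝ) ≠ 0 := by exact_mod_cast ha
    have hb' : (b : ℝ) ≠ 0 := by exact_mod_cast hb
    rw [density_apply _ _ _ ha, density_apply _ _ _ hb, density_apply _ _ _ (mul_ne_zero ha hb),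
      solCount_mul k u a b hab]
    push_cast
    field_simp
    ring

/-- The terms of the singular series, as the Möbius transform of the solution densities. -/
noncomputable def serTerm (k : Fin n → ℕ) (u : Fin n → Fin s → ℤ) : ArithmeticFunction ℝ :=
  density k u * (ArithmeticFunction.moebius : ArithmeticFunction ℝ)

lemma serTerm_isMultiplicative (k : Fin n → ℕ) (u : Fin n → Fin s → ℤ) :
    (serTerm k u).IsMultiplicative :=
  (density_isMultiplicative k u).mul ArithmeticFunction.isMultiplicative_moebius.intCast

lemma sum_divisors_serTerm (k : Fin n → ℕ) (u : Fin n → Fin s → ℤ) (q : ℕ) :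
    ∑ d ∈ q.divisors, serTerm k u d = density k u q := by
  have h : serTerm k u * (ArithmeticFunction.zeta : ArithmeticFunction ℝ) = density k u := by
    rw [serTerm, mul_assoc, ArithmeticFunction.coe_moebius_mul_coe_zeta, mul_one]
  rw [← h, ArithmeticFunction.coe_mul_zeta_apply]

lemma singSerTerm_eq_serTerm (k : Fin n → ℕ) (u : Fin n → Fin s → ℤ) (q : ℕ) (hq : q ≠ 0) :
    singSerTerm k u q = (serTerm k u q : ℂ) := by
  induction q using Nat.strong_induction_on with
  | _ q ih =>
    have h1 := sum_divisors_singSerTerm k u q hq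
    have h2 := congrArg (fun x : ℝ => (x : ℂ)) (sum_divisors_serTerm k u q)
    simp only [density_apply k u q hq] at h2
    push_cast at h2
    rw [← h2, ← Nat.insert_self_properDivisors hq,
      Finset.sum_insert Nat.self_notMem_properDivisors,
      Finset.sum_insert Nat.self_notMem_properDivisors] at h1
    have h3 : ∑ d ∈ q.properDivisors, singSerTerm k u d
        = ∑ d ∈ q.properDivisors, (serTerm k u d : ℂ) := by
      refine Finset.sum_congr rfl fun d hd => ?_
      rw [Nat.mem_properDivisors] at hd
      exact ih d hd.2 (fun h => hq (by rw [h] at hd; exact Nat.eq_zero_of_zero_dvd hd.1))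
    rw [h3] at h1
    exact add_right_cancel h1

end Density

/-! ### Absolute convergence -/

section Convergence

open Polynomial

variable {n s : ℕ}

lemma phasePoly_coeff (k : Fin n → ℕ) (hk : Function.Injective k) (u : Fin n → Fin s → ℤ)
    (a : Fin n → ℕ) (j : Fin s) (i : Fin n) :
    (phasePoly k u a j).coeff (k i) = (a i : ℤ) * u i j := by
  rw [phasePoly, finsetSum_coeff]
  simp_rw [coeff_C_mul_X_pow]
  rw [Finset.sum_eq_single i]
  · simp
  · intro b _ hb
    rw [if_neg]
    exact fun h => hb (hk h).symm
  · simp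

lemma phasePoly_coeff_zero (k : Fin n → ℕ) (hk : ∀ i, 1 ≤ k i) (u : Fin n → Fin s → ℤ)
    (a : Fin n → ℕ) (j : Fin s) : (phasePoly k u a j).coeff 0 = 0 := by
  rw [phasePoly, finsetSum_coeff]
  simp_rw [coeff_C_mul_X_pow]
  refine Finset.sum_eq_zero fun i _ => if_neg ?_
  have := hk i
  omega

lemma phasePoly_natDegree_le (k : Fin n → ℕ) (m : ℕ) (hk : ∀ i, k i ≤ m) (u : Fin n → Fin s → ℤ)
    (a : Fin n → ℕ) (j : Fin s) : (phasePoly k u a j).natDegree ≤ m := by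
  rw [phasePoly]
  refine natDegree_sum_le_of_forall_le _ _ fun i _ => ?_
  exact (natDegree_C_mul_X_pow_le _ _).trans (hk i)

/-- Bound for the phase sums at prime powers. The power of `p` dividing all coefficients of the
phase divides some `u i j`, hence is bounded, and may be pulled out. -/
lemma exists_norm_phase_le (m : ℕ) (hm : 1 ≤ m) (k : Fin n → ℕ) (hinj : Function.Injective k)
    (hk1 : ∀ i, 1 ≤ k i) (hkm : ∀ i, k i ≤ m) (u : Fin n → Fin s → ℤ) (hu : ∀ i j, u i j ≠ 0) :
    ∃ B : ℝ, 1 ≤ B ∧ ∀ (p : ℕ) [Fact p.Prime] (h : ℕ) (a : Fin n → ℕ), 1 ≤ h →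
      Nat.gcd (Finset.univ.gcd a) (p ^ h) = 1 → ∀ j,
      ‖expSum (p ^ h) (phasePoly k u a j)‖ ≤ B * theta p m ^ h := by
  obtain ⟨K, hK1, hK⟩ := exists_norm_expSum_prime_pow_le m hm
  set U : ℕ := 1 + ∑ i, ∑ j, (u i j).natAbs with hU
  have hUle : ∀ i j, (u i j).natAbs ≤ U := by
    intro i j
    have h1 : (u i j).natAbs ≤ ∑ j, (u i j).natAbs :=
      Finset.single_le_sum (f := fun j => (u i j).natAbs) (fun _ _ => Nat.zero_le _)
        (Finset.mem_univ j)
    have h2 : ∑ j, (u i j).natAbs ≤ ∑ i, ∑ j, (u i j).natAbs :=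
      Finset.single_le_sum (f := fun i => ∑ j, (u i j).natAbs) (fun _ _ => Nat.zero_le _)
        (Finset.mem_univ i)
    omega
  have hU1 : (1 : ℝ) ≤ U := by rw [hU]; push_cast; linarith [show (0:ℝ) ≤ ∑ i, ∑ j,
    (((u i j).natAbs : ℕ) : ℝ) by positivity]
  refine ⟨U * K, by nlinarith, ?_⟩
  intro p hp h a hh hgcd j
  have hp1 : 1 ≤ p := hp.out.one_le
  have hθ1 : 1 ≤ theta p m := one_le_theta p m hp1 hm
  have hex : ∃ i, ¬ p ∣ a i := by
    by_contra hcon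
    push Not at hcon
    have h1 : p ∣ Nat.gcd (Finset.univ.gcd a) (p ^ h) :=
      Nat.dvd_gcd (Finset.dvd_gcd fun i _ => hcon i) (dvd_pow_self p (by omega))
    rw [hgcd] at h1
    exact hp.out.one_lt.ne' (Nat.dvd_one.mp h1)
  obtain ⟨i, hi⟩ := hex
  have hcoef := phasePoly_coeff k hinj u a j i
  have hai : (a i : ℤ) ≠ 0 := by
    intro h0
    apply hi
    have : a i = 0 := by exact_mod_cast h0
    rw [this]; exact dvd_zero p
  have hne : phasePoly k u a j ≠ 0 := by
    intro h0
    rw [h0, coeff_zero] at hcoef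
    exact mul_ne_zero hai (hu i j) hcoef.symm
  obtain ⟨c, F, hF, hFmap⟩ := exists_eq_pow_mul_map_ne_zero p _ hne
  have hpc : ((p : ℤ) ^ c) ≠ 0 := pow_ne_zero _ (by exact_mod_cast hp.out.ne_zero)
  have hFdeg : F.natDegree ≤ m := by
    have := phasePoly_natDegree_le k m hkm u a j
    rwa [hF, natDegree_C_mul hpc] at this
  have hF0 : F.coeff 0 = 0 := by
    have := phasePoly_coeff_zero k hk1 u a j
    rw [hF, coeff_C_mul] at this
    exact (mul_eq_zero.mp this).resolve_left hpc
  have hFex : ∃ l, 1 ≤ l ∧ ¬ (p : ℤ) ∣ F.coeff l := by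
    obtain ⟨l, hl⟩ : ∃ l, (F.map (Int.castRingHom (ZMod p))).coeff l ≠ 0 := by
      by_contra hcon
      push Not at hcon
      exact hFmap (Polynomial.ext fun l => by rw [hcon l, coeff_zero])
    rw [coeff_map_ne_zero_iff] at hl
    refine ⟨l, ?_, hl⟩
    rcases Nat.eq_zero_or_pos l with h0 | h0
    · rw [h0, hF0] at hl; exact absurd (dvd_zero _) hl
    · exact h0
  have hcU : p ^ c ≤ U := by
    have h1 : (p : ℤ) ^ c ∣ (a i : ℤ) * u i j := by
      rw [← hcoef, hF, coeff_C_mul]; exact dvd_mul_right _ _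
    have hcop : IsCoprime ((p : ℤ) ^ c) (a i : ℤ) := by
      refine IsCoprime.pow_left ?_
      exact Nat.isCoprime_iff_coprime.mpr ((Nat.Prime.coprime_iff_not_dvd hp.out).mpr hi)
    have h2 := hcop.dvd_of_dvd_mul_left h1
    have h3 : p ^ c ∣ (u i j).natAbs := by
      rw [← Int.natCast_dvd_natCast, Int.dvd_natAbs]; push_cast; exact h2
    exact (Nat.le_of_dvd (Int.natAbs_pos.mpr (hu i j)) h3).trans (hUle i j)
  have hcU' : ((p ^ c : ℕ) : ℝ) ≤ U := by exact_mod_cast hcU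
  have hθh : ∀ l, l ≤ h → theta p m ^ l ≤ theta p m ^ h := fun l hl => pow_le_pow_right₀ hθ1 hl
  rcases le_total c h with hch | hch
  · have hsplit : p ^ h = p ^ (h - c) * p ^ c := by rw [← pow_add]; congr 1; omega
    have hC : (C ((p : ℤ) ^ c) : ℤ[X]) = C (((p ^ c : ℕ) : ℤ)) := by push_cast; rfl
    rw [hF, hsplit, hC, expSum_mul _ _ (pow_ne_zero _ hp.out.ne_zero)
      (pow_ne_zero _ hp.out.ne_zero), norm_mul, Complex.norm_natCast, mul_assoc]
    refine mul_le_mul hcU' ?_ (norm_nonneg _) (by positivity)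
    refine (hK p (h - c) F hFdeg hFex).trans ?_
    exact mul_le_mul_of_nonneg_left (hθh _ (Nat.sub_le h c)) (by linarith)
  · refine (norm_expSum_le _ _).trans ?_
    have h1 : ((p ^ h : ℕ) : ℝ) ≤ U := by
      refine le_trans ?_ hcU'
      exact_mod_cast Nat.pow_le_pow_right hp1 hch
    have h2 : (1 : ℝ) ≤ theta p m ^ h := one_le_pow₀ hθ1
    have h3 : (1 : ℝ) ≤ K * theta p m ^ h := by nlinarith
    rw [mul_assoc]
    nlinarith

/-- At prime powers the terms of the singular series decay like `q^{-1-1/m}`. -/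
lemma exists_abs_serTerm_prime_pow_le (m : ℕ) (hm : 1 ≤ m) (k : Fin n → ℕ)
    (hinj : Function.Injective k) (hk1 : ∀ i, 1 ≤ k i) (hkm : ∀ i, k i ≤ m)
    (hs : (n + 1) * m + 1 ≤ s) (u : Fin n → Fin s → ℤ) (hu : ∀ i j, u i j ≠ 0) :
    ∃ B : ℝ, 1 ≤ B ∧ ∀ (p : ℕ), p.Prime → ∀ (h : ℕ), 1 ≤ h →
      |serTerm k u (p ^ h)| ≤ B * ((p ^ h : ℕ) : ℝ) ^ (-(1 + 1 / (m : ℝ))) := by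
  obtain ⟨B, hB1, hB⟩ := exists_norm_phase_le m hm k hinj hk1 hkm u hu
  refine ⟨B ^ s, one_le_pow₀ hB1, ?_⟩
  intro p hp h hh
  have : Fact p.Prime := ⟨hp⟩
  have hq0 : p ^ h ≠ 0 := pow_ne_zero _ hp.ne_zero
  have hp0 : (0 : ℝ) < p := by exact_mod_cast hp.pos
  have hm0 : (0 : ℝ) < m := by exact_mod_cast hm
  set Q : ℝ := ((p ^ h : ℕ) : ℝ) with hQ
  have hQ1 : 1 ≤ Q := by rw [hQ]; exact_mod_cast Nat.one_le_pow _ _ hp.pos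
  have hQ0 : 0 < Q := by linarith
  have hθ : theta p m ^ h = Q ^ (1 - 1 / (m : ℝ)) := by
    rw [theta, hQ, ← Real.rpow_natCast, ← Real.rpow_mul hp0.le, mul_comm, Real.rpow_mul hp0.le,
      Real.rpow_natCast]
    push_cast; rfl
  have habs : |serTerm k u (p ^ h)| = ‖singSerTerm k u (p ^ h)‖ := by
    rw [singSerTerm_eq_serTerm k u _ hq0, Complex.norm_real, Real.norm_eq_abs]
  rw [habs, singSerTerm_eq k u _ hq0]
  have hterm : ∀ a ∈ (Fintype.piFinset fun _ : Fin n => Finset.Icc 1 (p ^ h)).filter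
        (fun a => Nat.gcd (Finset.univ.gcd a) (p ^ h) = 1),
      ‖normTerm k u (p ^ h) a‖ ≤ B ^ s * (Q ^ (-(1 / (m : ℝ)))) ^ s := by
    intro a ha
    rw [Finset.mem_filter] at ha
    rw [normTerm, norm_mul, norm_prod]
    have h1 : ∏ j, ‖expSum (p ^ h) (phasePoly k u a j)‖ ≤ (B * Q ^ (1 - 1 / (m : ℝ))) ^ s := by
      rw [← hθ]
      refine (Finset.prod_le_prod (fun _ _ => norm_nonneg _)
        fun j _ => hB p h a hh ha.2 j).trans (le_of_eq ?_)
      rw [Finset.prod_const, Finset.card_univ, Fintype.card_fin]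
    have h2 : ‖(1 / ((p ^ h : ℕ) : ℂ) ^ s)‖ = (Q⁻¹) ^ s := by
      rw [norm_div, norm_pow, Complex.norm_natCast, norm_one, one_div, inv_pow]
    rw [h2]
    refine (mul_le_mul_of_nonneg_left h1 (by positivity)).trans (le_of_eq ?_)
    rw [← mul_pow, ← mul_pow]
    congr 1
    rw [sub_eq_add_neg, Real.rpow_add hQ0, Real.rpow_one]
    field_simp
  refine (norm_sum_le _ _).trans ((Finset.sum_le_card_nsmul _ _ _ hterm).trans ?_)
  rw [nsmul_eq_mul]
  have hcard : ((((Fintype.piFinset fun _ : Fin n => Finset.Icc 1 (p ^ h)).filter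
        (fun a => Nat.gcd (Finset.univ.gcd a) (p ^ h) = 1)).card : ℕ) : ℝ) ≤ Q ^ n := by
    refine le_trans (Nat.cast_le.mpr (Finset.card_filter_le _ _)) ?_
    rw [Fintype.card_piFinset, Finset.prod_const, Nat.card_Icc, Finset.card_univ,
      Fintype.card_fin, hQ]
    simp
  refine (mul_le_mul_of_nonneg_right hcard (by positivity)).trans ?_
  rw [mul_left_comm]
  refine mul_le_mul_of_nonneg_left ?_ (by positivity)
  rw [← Real.rpow_natCast, ← Real.rpow_natCast, ← Real.rpow_mul hQ0.le, ← Real.rpow_add hQ0]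
  refine Real.rpow_le_rpow_of_exponent_le hQ1 ?_
  have hs' : ((n : ℝ) + 1) * m + 1 ≤ s := by exact_mod_cast hs
  have h5 : (n : ℝ) + 1 + 1 / m ≤ s / m := by
    rw [le_div_iff₀ hm0]
    have : (1 / (m : ℝ)) * m = 1 := by field_simp
    nlinarith
  have h6 : -(1 / (m : ℝ)) * s = -(s / m) := by ring
  rw [h6]; linarith

/-- A multiplicative function that is `O(q^{-1-2δ})` at prime powers is `O(q^{-1-δ})`: the constant
is absorbed into `p^{δ}` for all but finitely many primes. -/
lemma summable_of_isMultiplicative (f : ArithmeticFunction ℝ) (hf : f.IsMultiplicative) (B δ : ℝ)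
    (hB : 1 ≤ B) (hδ : 0 < δ)
    (hbound : ∀ p : ℕ, p.Prime → ∀ h : ℕ, 1 ≤ h →
      |f (p ^ h)| ≤ B * ((p ^ h : ℕ) : ℝ) ^ (-(1 + 2 * δ))) :
    Summable fun q => ‖f q‖ := by
  obtain ⟨P, hP⟩ : ∃ P : ℕ, B ≤ (P : ℝ) ^ δ := by
    have := (tendsto_rpow_atTop hδ).comp tendsto_natCast_atTop_atTop
    obtain ⟨P, hP⟩ := (this.eventually_ge_atTop B).exists
    exact ⟨P, hP⟩
  have hlocal : ∀ p : ℕ, p.Prime → ∀ h : ℕ, 1 ≤ h →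
      |f (p ^ h)| ≤ (if p < P then B else 1) * ((p ^ h : ℕ) : ℝ) ^ (-(1 + δ)) := by
    intro p hp h hh
    have hQ1 : (1 : ℝ) ≤ ((p ^ h : ℕ) : ℝ) := by exact_mod_cast Nat.one_le_pow _ _ hp.pos
    have hQ0 : (0 : ℝ) < ((p ^ h : ℕ) : ℝ) := by linarith
    refine (hbound p hp h hh).trans ?_
    split_ifs with hpP
    · refine mul_le_mul_of_nonneg_left ?_ (by linarith)
      exact Real.rpow_le_rpow_of_exponent_le hQ1 (by linarith)
    · have h1 : B ≤ ((p ^ h : ℕ) : ℝ) ^ δ := by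
        refine hP.trans (Real.rpow_le_rpow (by positivity) ?_ hδ.le)
        have : P ≤ p ^ h := (not_lt.mp hpP).trans (Nat.le_self_pow (by omega) p)
        exact_mod_cast this
      calc B * ((p ^ h : ℕ) : ℝ) ^ (-(1 + 2 * δ))
          ≤ ((p ^ h : ℕ) : ℝ) ^ δ * ((p ^ h : ℕ) : ℝ) ^ (-(1 + 2 * δ)) :=
            mul_le_mul_of_nonneg_right h1 (by positivity)
        _ = 1 * ((p ^ h : ℕ) : ℝ) ^ (-(1 + δ)) := by
            rw [← Real.rpow_add hQ0, one_mul]; congr 1; ring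
  have hmain : ∀ q : ℕ, ‖f q‖ ≤ B ^ P * (q : ℝ) ^ (-(1 + δ)) := by
    intro q
    rcases Nat.eq_zero_or_pos q with rfl | hq
    · rw [ArithmeticFunction.map_zero, norm_zero]; positivity
    have hq0 : q ≠ 0 := hq.ne'
    rw [hf.multiplicative_factorization f hq0, Finsupp.prod, norm_prod]
    have h1 : ∏ p ∈ q.factorization.support, ‖f (p ^ q.factorization p)‖
        ≤ ∏ p ∈ q.factorization.support, ((if p < P then B else 1) *
          ((p ^ q.factorization p : ℕ) : ℝ) ^ (-(1 + δ))) := by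
      refine Finset.prod_le_prod (fun _ _ => norm_nonneg _) fun p hp => ?_
      rw [Real.norm_eq_abs]
      refine hlocal p ?_ _ ?_
      · exact Nat.prime_of_mem_primeFactors (by simpa using hp)
      · exact Nat.pos_of_ne_zero (Finsupp.mem_support_iff.mp hp)
    refine h1.trans ?_
    rw [Finset.prod_mul_distrib]
    have h2 : ∏ p ∈ q.factorization.support, ((p ^ q.factorization p : ℕ) : ℝ) ^ (-(1 + δ))
        = (q : ℝ) ^ (-(1 + δ)) := by
      rw [Real.finsetProd_rpow _ _ (fun _ _ => by positivity)]
      congr 1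
      have := Nat.prod_factorization_pow_eq_self hq0
      rw [Finsupp.prod] at this
      exact_mod_cast this
    have h3 : ∏ p ∈ q.factorization.support, (if p < P then B else 1) ≤ B ^ P := by
      rw [Finset.prod_ite, Finset.prod_const, Finset.prod_const_one, mul_one]
      refine pow_le_pow_right₀ hB ?_
      calc _ ≤ (Finset.range P).card := Finset.card_le_card fun p hp => by
            rw [Finset.mem_filter] at hp; exact Finset.mem_range.mpr hp.2
        _ = P := Finset.card_range P
    rw [h2]
    exact mul_le_mul_of_nonneg_right h3 (by positivity)
  refine Summable.of_nonneg_of_le (fun _ => norm_nonneg _) hmain ?_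
  exact (Real.summable_nat_rpow.mpr (by linarith)).mul_left _

end Convergence

/-! ### Positivity of the local densities -/

section LocalDensity

variable {n s : ℕ}

/-- A matrix of full row rank has at most `n` columns that already span. -/
lemma exists_spanning_columns {K : Type*} [Field K] (M : Matrix (Fin n) (Fin s) K)
    (hM : M.rank = n) :
    ∃ J : Finset (Fin s), J.card ≤ n ∧
      ∀ w : Fin n → K, ∃ c : Fin s → K, (∀ j ∉ J, c j = 0) ∧ ∀ i, ∑ j, M i j * c j = w i := by
  classical
  obtain ⟨κ, a, ha, hspan, hli⟩ := exists_linearIndependent' K M.col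
  have : Finite κ := Finite.of_injective a ha
  have : Fintype κ := Fintype.ofFinite κ
  have htop : Submodule.span K (Set.range M.col) = ⊤ := by
    apply Submodule.eq_top_of_finrank_eq
    rw [← Matrix.rank_eq_finrank_span_cols, hM]; simp
  refine ⟨Finset.univ.image a, ?_, ?_⟩
  · refine Finset.card_image_le.trans ?_
    have := hli.fintype_card_le_finrank
    simpa using this
  · intro w
    have hw : w ∈ Submodule.span K (Set.range (M.col ∘ a)) := by
      rw [hspan, htop]; exact Submodule.mem_top
    rw [Submodule.mem_span_range_iff_exists_fun] at hw
    obtain ⟨c, hc⟩ := hw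
    refine ⟨Function.extend a c 0, ?_, ?_⟩
    · intro j hj
      rw [Function.extend_apply' _ _ _ (fun ⟨l, hl⟩ => hj (by rw [← hl]; simp))]
      rfl
    · intro i
      have h1 := congrFun hc i
      rw [Finset.sum_apply] at h1
      rw [← h1, ← Finset.sum_subset (Finset.subset_univ (Finset.univ.image a)),
        Finset.sum_image (fun x _ y _ h => ha h)]
      · refine Finset.sum_congr rfl fun l _ => ?_
        rw [ha.extend_apply]
        exact mul_comm _ _
      · intro j _ hj
        rw [Function.extend_apply' _ _ _ (fun ⟨l, hl⟩ => hj (by rw [← hl]; simp))]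
        simp

lemma hasStrictFDerivAt_dF {K : Type*} [NontriviallyNormedField K] (k : Fin n → ℕ)
    (u : Fin n → Fin s → ℤ) (i : Fin n) (η : Fin s → K) :
    HasStrictFDerivAt (fun t : Fin s → K => dF k u i t)
      (∑ j, ((k i : K) * (u i j : K) * η j ^ (k i - 1)) •
        (ContinuousLinearMap.proj j : (Fin s → K) →L[K] K)) η := by
  unfold dF
  refine HasStrictFDerivAt.fun_sum fun j _ => ?_
  have h := ((hasStrictFDerivAt_apply (𝕜 := K) (F' := fun _ : Fin s => K) j η).pow (k i)).const_mul
    (u i j : K)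
  refine h.congr_fderiv ?_
  rw [smul_smul, nsmul_eq_mul]
  congr 1
  ring

/-- Implicit function theorem at a nonsingular zero: the coordinates outside a set of at most `n`
indices may be prescribed freely near the given zero, here inside any neighbourhood `N`. -/
lemma NonsingularSol.exists_local_param {K : Type*} [NontriviallyNormedField K] [CompleteSpace K]
    (k : Fin n → ℕ) (u : Fin n → Fin s → ℤ) (η : Fin s → K) (hη : NonsingularSol k u η)
    (N : Set (Fin s → K)) (hN : N ∈ nhds η) :
    ∃ J : Finset (Fin s), J.card ≤ n ∧ ∃ ε : ℝ, 0 < ε ∧ ∀ y : Fin s → K,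
      (∀ j, ‖y j - η j‖ < ε) → ∃ x ∈ N, (∀ i, dF k u i x = 0) ∧ ∀ j ∉ J, x j = y j := by
  obtain ⟨J, hJ, hJspan⟩ := exists_spanning_columns _ hη.2
  refine ⟨J, hJ, ?_⟩
  set D : (Fin s → K) →L[K] (Fin n → K) := ContinuousLinearMap.pi fun i =>
    ∑ j, ((k i : K) * (u i j : K) * η j ^ (k i - 1)) •
        (ContinuousLinearMap.proj j : (Fin s → K) →L[K] K) with hD
  set R : (Fin s → K) →L[K] ({j // j ∉ J} → K) := ContinuousLinearMap.pi fun j =>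
    ContinuousLinearMap.proj j.1 with hR
  have hDapp : ∀ v i, D v i = ∑ j, ((k i : K) * (u i j : K) * η j ^ (k i - 1)) * v j := by
    intro v i
    simp [hD]
  have hstrict : HasStrictFDerivAt
      (fun t : Fin s → K => ((fun i => dF k u i t), fun j : {j // j ∉ J} => t j.1))
      (D.prod R) η := by
    refine HasStrictFDerivAt.prodMk ?_ R.hasStrictFDerivAt
    rw [hasStrictFDerivAt_pi']
    intro i
    exact hasStrictFDerivAt_dF k u i η
  have hsurj : ((D.prod R).toLinearMap).range = ⊤ := by
    rw [LinearMap.range_eq_top]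
    rintro ⟨w, y⟩
    classical
    set y' : Fin s → K := fun j => if h : j ∉ J then y ⟨j, h⟩ else 0 with hy'
    obtain ⟨c, hc0, hc⟩ := hJspan (fun i => w i - D y' i)
    refine ⟨c + y', ?_⟩
    refine Prod.ext ?_ ?_
    · funext i
      change D (c + y') i = w i
      rw [map_add, Pi.add_apply, hDapp c i]
      have := hc i
      simp only [Matrix.of_apply] at this
      rw [this]; ring
    · funext j
      change c j.1 + y' j.1 = y j
      rw [hc0 j.1 j.2, zero_add, hy']
      simp only [dif_pos j.2]
  have hmap := hstrict.map_nhds_eq_of_surj hsurj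
  have hmem := Filter.image_mem_map (m := fun t : Fin s → K =>
    ((fun i => dF k u i t), fun j : {j // j ∉ J} => t j.1)) hN
  rw [hmap] at hmem
  obtain ⟨ε, hε, hball⟩ := Metric.mem_nhds_iff.mp hmem
  refine ⟨ε, hε, fun y hy => ?_⟩
  have hin : ((fun i => (0 : K)), fun j : {j // j ∉ J} => y j.1) ∈
      Metric.ball (((fun i => dF k u i η), fun j : {j // j ∉ J} => η j.1) :
        (Fin n → K) × ({j // j ∉ J} → K)) ε := by
    rw [Metric.mem_ball, Prod.dist_eq, max_lt_iff]
    constructor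
    · rw [dist_pi_lt_iff hε]
      intro i
      simp only [hη.1 i, dist_self, hε]
    · rw [dist_pi_lt_iff hε]
      intro j
      rw [dist_eq_norm]; exact hy j.1
  obtain ⟨x, hxN, hx⟩ := hball hin
  refine ⟨x, hxN, fun i => congrFun (congrArg Prod.fst hx) i, fun j hj => ?_⟩
  exact congrFun (congrArg Prod.snd hx) ⟨j, hj⟩

lemma NonsingularSol.smul {K : Type*} [Field K] (k : Fin n → ℕ) (u : Fin n → Fin s → ℤ)
    (η : Fin s → K) (hη : NonsingularSol k u η) (c : K) (hc : c ≠ 0) :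
    NonsingularSol k u (fun j => c * η j) := by
  constructor
  · intro i
    have h1 : dF k u i (fun j => c * η j) = c ^ k i * dF k u i η := by
      rw [dF, dF, Finset.mul_sum]
      refine Finset.sum_congr rfl fun j _ => ?_
      rw [mul_pow]; ring
    rw [h1, hη.1 i, mul_zero]
  · have h1 : (Matrix.of fun i j => (k i : K) * (u i j : K) * (c * η j) ^ (k i - 1))
        = Matrix.diagonal (fun i => c ^ (k i - 1)) *
          (Matrix.of fun i j => (k i : K) * (u i j : K) * η j ^ (k i - 1)) := by
      ext i j
      rw [Matrix.diagonal_mul, Matrix.of_apply, Matrix.of_apply, mul_pow]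
      ring
    rw [h1, Matrix.rank_mul_eq_right_of_isUnit_det, hη.2]
    rw [Matrix.det_diagonal, isUnit_iff_ne_zero]
    exact Finset.prod_ne_zero_iff.mpr fun i _ => pow_ne_zero _ hc

lemma exists_integral_nonsingularSol (p : ℕ) [Fact p.Prime] (k : Fin n → ℕ)
    (u : Fin n → Fin s → ℤ) (η : Fin s → ℚ_[p]) (hη : NonsingularSol k u η) :
    ∃ ξ : Fin s → ℚ_[p], NonsingularSol k u ξ ∧ ∀ j, ‖ξ j‖ ≤ 1 := by
  have hp : (1 : ℝ) < p := by exact_mod_cast (Fact.out : p.Prime).one_lt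
  obtain ⟨N, hN⟩ := pow_unbounded_of_one_lt ‖η‖ hp
  refine ⟨fun j => (p : ℚ_[p]) ^ N * η j, hη.smul k u η _ (pow_ne_zero _ ?_), fun j => ?_⟩
  · exact_mod_cast (Fact.out : p.Prime).ne_zero
  · rw [norm_mul, norm_pow, Padic.norm_p, inv_pow, inv_mul_le_one₀ (by positivity)]
    exact (norm_le_pi_norm η j).trans hN.le

/-- Nonsingular `p`-adic solubility bounds the solution densities modulo powers of `p` away from
zero. -/
lemma exists_density_prime_pow_ge (p : ℕ) [Fact p.Prime] (k : Fin n → ℕ)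
    (u : Fin n → Fin s → ℤ) (η : Fin s → ℚ_[p]) (hη : NonsingularSol k u η) :
    ∃ c : ℝ, 0 < c ∧ ∃ m : ℕ, ∀ H, m ≤ H → c ≤ density k u (p ^ H) := by
  have hpp : p.Prime := Fact.out
  have hp1 : (1 : ℝ) < p := by exact_mod_cast hpp.one_lt
  obtain ⟨ξ, hξ, hξ1⟩ := exists_integral_nonsingularSol p k u η hη
  have hN : {x : Fin s → ℚ_[p] | ∀ j, ‖x j‖ ≤ 1} ∈ nhds ξ := by
    refine Metric.mem_nhds_iff.mpr ⟨1, one_pos, fun x hx j => ?_⟩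
    rw [Metric.mem_ball, dist_pi_lt_iff one_pos] at hx
    have h1 := hx j
    rw [dist_eq_norm] at h1
    have h2 : x j = (x j - ξ j) + ξ j := by ring
    rw [h2]
    exact (Padic.nonarchimedean _ _).trans (max_le h1.le (hξ1 j))
  obtain ⟨J, hJ, ε, hε, hpar⟩ := hξ.exists_local_param k u ξ _ hN
  obtain ⟨m, hm⟩ := exists_pow_lt_of_lt_one hε (inv_lt_one_of_one_lt₀ hp1)
  refine ⟨1 / (p : ℝ) ^ (m * s), by positivity, m, fun H hH => ?_⟩
  obtain ⟨l, rfl⟩ := Nat.exists_eq_add_of_le hH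
  obtain ⟨ζ, hζ⟩ : ∃ ζ : Fin s → ℤ_[p], ∀ j, (ζ j : ℚ_[p]) = ξ j :=
    ⟨fun j => ⟨ξ j, hξ1 j⟩, fun _ => rfl⟩
  -- Lifts with free coordinates `ξ j + p^m t j`.
  have hlift : ∀ t : {j // j ∉ J} → Fin (p ^ l), ∃ x : Fin s → ℤ_[p],
      (∀ i, dF k u i x = 0) ∧
        ∀ j : {j // j ∉ J}, x j.1 = ζ j.1 + (p : ℤ_[p]) ^ m * ((t j : ℕ) : ℤ_[p]) := by
    intro t
    classical
    obtain ⟨x, hxN, hx0, hxy⟩ := hpar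
      (fun j => ξ j + if h : j ∉ J then (p : ℚ_[p]) ^ m * ((t ⟨j, h⟩ : ℕ) : ℚ_[p]) else 0) (by
        intro j
        rw [add_sub_cancel_left]
        by_cases h : j ∉ J
        · rw [dif_pos h, norm_mul, norm_pow, Padic.norm_p]
          have h2 : ‖(((t ⟨j, h⟩ : ℕ) : ℚ_[p]))‖ ≤ 1 := by
            exact_mod_cast Padic.norm_int_le_one ((t ⟨j, h⟩ : ℕ) : ℤ)
          have h3 : (0 : ℝ) ≤ ((p : ℝ)⁻¹) ^ m := by positivity
          nlinarith
        · rw [dif_neg h, norm_zero]; exact hε)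
    refine ⟨fun j => ⟨x j, hxN j⟩, fun i => ?_, fun j => ?_⟩
    · have h1 := dF_ringHom (PadicInt.Coe.ringHom (p := p)) k u i (fun j => (⟨x j, hxN j⟩ : ℤ_[p]))
      have h2 : (PadicInt.Coe.ringHom (p := p)) (dF k u i (fun j => (⟨x j, hxN j⟩ : ℤ_[p]))) = 0 := by
        rw [← h1]; exact hx0 i
      exact Subtype.coe_injective h2
    · apply Subtype.coe_injective
      have := hxy j.1 j.2
      rw [dif_pos j.2] at this
      push_cast
      rw [hζ]
      exact this
  choose x hx0 hx using hlift
  have hq0 : p ^ (m + l) ≠ 0 := pow_ne_zero _ hpp.ne_zero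
  have : NeZero (p ^ (m + l)) := ⟨hq0⟩
  have hcount : (p ^ l) ^ (s - J.card) ≤ solCount k u (p ^ (m + l)) := by
    have hinj : Function.Injective (fun t : {j // j ∉ J} → Fin (p ^ l) =>
        (⟨fun j => PadicInt.toZModPow (m + l) (x t j), fun i => by
          rw [dF_ringHom, hx0 t i, map_zero]⟩ :
          {r : Fin s → ZMod (p ^ (m + l)) // ∀ i, dF k u i r = 0})) := by
      intro t t' htt
      funext j
      have h1 := congrFun (congrArg Subtype.val htt) j.1
      simp only [hx t j, hx t' j] at h1
      rw [map_add, map_add, add_right_inj] at h1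
      have hlt : ∀ v : Fin (p ^ l), p ^ m * (v : ℕ) < p ^ (m + l) := fun v => by
        rw [pow_add]; exact Nat.mul_lt_mul_of_pos_left v.2 (pow_pos hpp.pos m)
      have h2 : ((p ^ m * (t j : ℕ) : ℕ) : ZMod (p ^ (m + l)))
          = ((p ^ m * (t' j : ℕ) : ℕ) : ZMod (p ^ (m + l))) := by
        push_cast
        simpa using h1
      rw [ZMod.natCast_eq_natCast_iff', Nat.mod_eq_of_lt (hlt _), Nat.mod_eq_of_lt (hlt _)] at h2
      exact Fin.ext (Nat.eq_of_mul_eq_mul_left (pow_pos hpp.pos m) h2)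
    have h3 := Nat.card_le_card_of_injective _ hinj
    rw [Nat.card_fun, Nat.card_eq_fintype_card, Nat.card_eq_fintype_card, Fintype.card_fin] at h3
    have h4 : Fintype.card {j // j ∉ J} = s - J.card := by
      rw [Fintype.card_subtype_compl, Fintype.card_fin, Fintype.card_coe]
    rw [h4] at h3
    exact h3
  rw [density_apply k u _ hq0, div_le_div_iff₀ (by positivity) (by positivity), one_mul]
  have hJs : J.card ≤ s := by simpa using Finset.card_le_univ J
  obtain ⟨d, hd⟩ := Nat.exists_eq_add_of_le hJs
  have hnat : (p ^ (m + l)) ^ s ≤ solCount k u (p ^ (m + l)) * (p ^ (m + l)) ^ n * p ^ (m * s) := by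
    refine le_trans ?_ (Nat.mul_le_mul_right _ (Nat.mul_le_mul_right _ hcount))
    rw [← pow_mul, ← pow_mul, ← pow_mul, ← pow_add, ← pow_add]
    refine Nat.pow_le_pow_right hpp.pos ?_
    have h5 : s - J.card = d := by omega
    rw [h5]
    have h6 : l * J.card ≤ l * n := Nat.mul_le_mul_left l hJ
    calc (m + l) * s = l * d + l * J.card + m * s := by
          have h7 : l * s = l * J.card + l * d := by rw [← mul_add, ← hd]
          rw [add_mul, h7]; ring
      _ ≤ l * d + (m + l) * n + m * s := by nlinarith [Nat.zero_le (m * n)]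
  exact_mod_cast hnat

end LocalDensity

/-! ### The Euler product and its positivity -/

section Conclusion

variable {n s : ℕ}

/-- An absolutely convergent Euler product with positive factors is positive, since the sum of the
logarithms of its factors converges. -/
lemma tsum_pos_of_local_pos (f : ArithmeticFunction ℝ) (hf : f.IsMultiplicative)
    (hsum : Summable fun q => ‖f q‖)
    (hpos : ∀ p : Nat.Primes, 0 < ∑' h, f ((p : ℕ) ^ h)) : 0 < ∑' q, f q := by
  have hsum' : Summable fun q => f q := hsum.of_norm
  have hpp : Summable fun x : Nat.Primes × ℕ => f ((x.1 : ℕ) ^ (x.2 + 1)) :=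
    hsum'.comp_injective (i := fun x : Nat.Primes × ℕ => (x.1 : ℕ) ^ (x.2 + 1))
      (Subtype.val_injective.comp Nat.Primes.prodNatEquiv.injective)
  have hloc : Summable fun p : Nat.Primes => ∑' h, f ((p : ℕ) ^ (h + 1)) := hpp.prod
  have hone : ∀ p : Nat.Primes, ∑' h, f ((p : ℕ) ^ h) = 1 + ∑' h, f ((p : ℕ) ^ (h + 1)) := by
    intro p
    have h1 : Summable fun h => f ((p : ℕ) ^ h) :=
      hsum'.comp_injective (Nat.pow_right_injective p.2.two_le)
    rw [h1.tsum_eq_zero_add, pow_zero, hf.1]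
  have hlog := Real.summable_log_one_add_of_summable hloc
  simp_rw [← hone] at hlog
  rw [← hf.eulerProduct_tprod hsum, ← Real.rexp_tsum_eq_tprod hpos hlog]
  exact Real.exp_pos _

lemma local_factor_pos (k : Fin n → ℕ) (u : Fin n → Fin s → ℤ)
    (hsum : Summable fun q => ‖serTerm k u q‖) (p : ℕ) [hp : Fact p.Prime]
    (η : Fin s → ℚ_[p]) (hη : NonsingularSol k u η) : 0 < ∑' h, serTerm k u (p ^ h) := by
  obtain ⟨c, hc, m, hm⟩ := exists_density_prime_pow_ge p k u η hη
  have h1 : Summable fun h => serTerm k u (p ^ h) :=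
    hsum.of_norm.comp_injective (Nat.pow_right_injective hp.out.two_le)
  have h2 := (h1.hasSum.tendsto_sum_nat).comp (Filter.tendsto_add_atTop_nat 1)
  refine hc.trans_le (ge_of_tendsto h2 ?_)
  filter_upwards [Filter.eventually_ge_atTop m] with H hH
  have h3 := sum_divisors_serTerm k u (p ^ H)
  rw [Nat.sum_divisors_prime_pow hp.out] at h3
  change c ≤ ∑ h ∈ Finset.range (H + 1), serTerm k u (p ^ h)
  rw [h3]
  exact hm H hH

end Conclusion

theorem stmt16 (n s : ℕ) (hn : 1 ≤ n) (k : Fin n → ℕ)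
    (hk1 : 1 ≤ k ⟨0, hn⟩) (hkmono : StrictMono k)
    (hs : (n + 1) * k ⟨n - 1, by omega⟩ + 1 ≤ s)
    (u : Fin n → Fin s → ℤ) (hu : ∀ i j, u i j ≠ 0) :
    Summable (fun q : ℕ => ‖singSerTerm k u (q + 1)‖) ∧
    ((∀ (p : ℕ) (_ : Fact p.Prime), ∃ η : Fin s → ℚ_[p], NonsingularSol k u η) →
      ∃ c : ℝ, 0 < c ∧ singSer k u = (c : ℂ)) := by

  set m : ℕ := k ⟨n - 1, by omega⟩ with hm
  have hk1' : ∀ i, 1 ≤ k i := fun i =>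
    hk1.trans (hkmono.monotone (Fin.mk_le_of_le_val (Nat.zero_le _)))
  have hkm : ∀ i, k i ≤ m := fun i =>
    hkmono.monotone (Fin.le_def.mpr (by have := i.2; simp only; omega))
  have hm1 : 1 ≤ m := hk1' _
  have hm0 : (0 : ℝ) < m := by exact_mod_cast hm1
  obtain ⟨B, hB1, hB⟩ :=
    exists_abs_serTerm_prime_pow_le m hm1 k hkmono.injective hk1' hkm hs u hu
  have hsum : Summable fun q => ‖serTerm k u q‖ := by
    refine summable_of_isMultiplicative _ (serTerm_isMultiplicative k u) B (1 / (2 * m)) hB1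
      (by positivity) fun p hp h hh => ?_
    have h1 : 2 * (1 / (2 * (m : ℝ))) = 1 / m := by field_simp
    rw [h1]
    exact hB p hp h hh
  have hterm : ∀ q : ℕ, singSerTerm k u (q + 1) = (serTerm k u (q + 1) : ℂ) :=
    fun q => singSerTerm_eq_serTerm k u (q + 1) (Nat.succ_ne_zero q)
  refine ⟨?_, fun hsol => ⟨∑' q, serTerm k u q, ?_, ?_⟩⟩
  · simp_rw [hterm, Complex.norm_real]
    exact (summable_nat_add_iff (f := fun q => ‖serTerm k u q‖) 1).mpr hsum
  · refine tsum_pos_of_local_pos _ (serTerm_isMultiplicative k u) hsum fun p => ?_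
    have hp : Fact (p : ℕ).Prime := ⟨p.2⟩
    obtain ⟨η, hη⟩ := hsol p hp
    exact local_factor_pos k u hsum p η hη
  · rw [singSer]
    simp_rw [hterm]
    rw [← Complex.ofReal_tsum, hsum.of_norm.tsum_eq_zero_add, ArithmeticFunction.map_zero, zero_add]
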